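/- Let G be a countable discrete amenable group acting continuously on a compact metric space (X,d), let μ be a G-invariant, G-ergodic Borel probability measure on X, and let {F_n} be a tempered Følner sequence in G with lim_{n→∞} |F_n|/log n = ∞. Then for μ-almost every x ∈ X, lim_{δ→0} liminf_{n→∞} −(1/|F_n|) log μ(B_{F_n}(x,δ)) = lim_{δ→0} limsup_{n→∞} −(1/|F_n|) log μ(B_{F_n}(x,δ)) = h_μ(X,G). -/

import Mathlib

open Filter Set MeasureTheory Topology ENNReal Pointwise

variable {G X : Type*}

section Defs

variable [Group G] [MetricSpace X] [MulAction G X]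

/-- The Bowen ball `B_F(x,ε) = {y : d(gx,gy) < ε for all g ∈ F}`. -/
def bowenBall (F : Finset G) (x : X) (ε : ℝ) : Set X :=
  {y : X | ∀ g ∈ F, dist (g • x) (g • y) < ε}

/-- A Følner sequence: `|F_n ∆ gF_n|/|F_n| → 0` for every `g ∈ G`. -/
def IsFolnerSeq (F : ℕ → Finset G) : Prop :=
  ∀ g : G, Tendsto
    (fun n => ((symmDiff (F n : Set G) ((g * ·) '' (F n : Set G))).ncard : ℝ) / (F n).card)
    atTop (𝓝 0)

/-- A tempered sequence: `|⋃_{k<n} F_k⁻¹ F_n| ≤ C |F_n|` for all `n`. -/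
def IsTemperedSeq (F : ℕ → Finset G) : Prop :=
  ∃ C : ℝ, 0 < C ∧ ∀ n : ℕ,
    ((⋃ k ∈ Finset.range n, ((F k : Set G)⁻¹ * (F n : Set G))).ncard : ℝ) ≤ C * (F n).card

/-- The growth condition `lim_n |F_n| / log n = ∞`. -/
def GrowthCond (F : ℕ → Finset G) : Prop :=
  Tendsto (fun n : ℕ => ((F n).card : ℝ) / Real.log n) atTop atTop

/-- `M(Z,N,ε,s,{F_n})`: infimum of `∑ exp(-s |F_{n_i}|)` over countable families of Bowen
balls `B_{F_{n_i}}(x_i,ε)`, `n_i ≥ N`, covering `Z`. -/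
noncomputable def ballM (F : ℕ → Finset G) (Z : Set X) (N : ℕ) (ε s : ℝ) : ℝ≥0∞ :=
  ⨅ (I : Set (X × ℕ)) (_ : I.Countable) (_ : ∀ p ∈ I, N ≤ p.2)
    (_ : Z ⊆ ⋃ p ∈ I, bowenBall (F p.2) p.1 ε),
    ∑' p : I, ENNReal.ofReal (Real.exp (-s * ((F (p : X × ℕ).2).card : ℝ)))

/-- `M(Z,ε,s,{F_n}) = lim_{N→∞} M(Z,N,ε,s,{F_n})` (the quantity is nondecreasing in `N`). -/
noncomputable def ballMN (F : ℕ → Finset G) (Z : Set X) (ε s : ℝ) : ℝ≥0∞ :=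
  ⨆ N : ℕ, ballM F Z N ε s

/-- `M(Z,s,{F_n}) = lim_{ε→0} M(Z,ε,s,{F_n})` (the quantity is nondecreasing as `ε` decreases). -/
noncomputable def ballMtot (F : ℕ → Finset G) (Z : Set X) (s : ℝ) : ℝ≥0∞ :=
  ⨆ (ε : ℝ) (_ : 0 < ε), ballMN F Z ε s

/-- The Bowen topological entropy of `Z` along `{F_n}`: the critical value of `s` at which
`M(Z,s,{F_n})` jumps from `+∞` to `0`, i.e. `inf {s : M(Z,s,{F_n}) = 0}`. -/
noncomputable def bowenEnt (F : ℕ → Finset G) (Z : Set X) : ℝ≥0∞ :=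
  ⨅ (s : ℝ) (_ : ballMtot F Z s = 0), ENNReal.ofReal s

/-- The weighted quantity `W(f,N,ε,s,{F_n})`. -/
noncomputable def wtW (F : ℕ → Finset G) (f : X → ℝ≥0∞) (N : ℕ) (ε s : ℝ) : ℝ≥0∞ :=
  ⨅ (I : Set (X × ℕ)) (c : X × ℕ → ℝ≥0∞) (_ : I.Countable)
    (_ : ∀ p ∈ I, N ≤ p.2 ∧ 0 < c p ∧ c p < ⊤)
    (_ : ∀ x : X, f x ≤ ∑' p : I, c (p : X × ℕ) *
        (bowenBall (F (p : X × ℕ).2) (p : X × ℕ).1 ε).indicator (fun _ => (1 : ℝ≥0∞)) x),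
    ∑' p : I, c (p : X × ℕ) * ENNReal.ofReal (Real.exp (-s * ((F (p : X × ℕ).2).card : ℝ)))

/-- `W(Z,N,ε,s,{F_n}) = W(χ_Z,N,ε,s,{F_n})`. -/
noncomputable def wtWset (F : ℕ → Finset G) (Z : Set X) (N : ℕ) (ε s : ℝ) : ℝ≥0∞ :=
  wtW F (Z.indicator fun _ => (1 : ℝ≥0∞)) N ε s

/-- `W(Z,ε,s,{F_n}) = lim_{N→∞} W(Z,N,ε,s,{F_n})`. -/
noncomputable def wtWN (F : ℕ → Finset G) (Z : Set X) (ε s : ℝ) : ℝ≥0∞ :=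
  ⨆ N : ℕ, wtWset F Z N ε s

/-- `W(Z,s,{F_n}) = lim_{ε→0} W(Z,ε,s,{F_n})`. -/
noncomputable def wtWtot (F : ℕ → Finset G) (Z : Set X) (s : ℝ) : ℝ≥0∞ :=
  ⨆ (ε : ℝ) (_ : 0 < ε), wtWN F Z ε s

/-- The weighted Bowen topological entropy of `Z` along `{F_n}`. -/
noncomputable def wtBowenEnt (F : ℕ → Finset G) (Z : Set X) : ℝ≥0∞ :=
  ⨅ (s : ℝ) (_ : wtWtot F Z s = 0), ENNReal.ofReal s

/-- A finite open cover of `X`. -/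
def IsFinOpenCover (𝒰 : Finset (Set X)) : Prop :=
  (∀ U ∈ 𝒰, IsOpen U) ∧ ⋃₀ (𝒰 : Set (Set X)) = Set.univ

/-- `N(⋁_{g∈F} g⁻¹𝒰)`: the minimal cardinality of a subcover of the refined cover, whose members
are the sets `X(𝐔) = ⋂_{g∈F} g⁻¹ U_g` with `U_g ∈ 𝒰`. -/
noncomputable def coverNum (𝒰 : Finset (Set X)) (F : Finset G) : ℕ :=
  sInf {k : ℕ | ∃ Λ : Finset (G → Set X), Λ.card = k ∧
    (∀ u ∈ Λ, ∀ g ∈ F, u g ∈ 𝒰) ∧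
    (⋃ u ∈ Λ, ⋂ g ∈ F, (fun y => g • y) ⁻¹' u g) = Set.univ}

/-- `h_top(G,𝒰) = lim_n (1/|F_n|) log N(⋁_{g∈F_n} g⁻¹𝒰)` (the limit exists by Ornstein–Weiss,
hence equals the `limsup`). -/
noncomputable def coverTopEnt (F : ℕ → Finset G) (𝒰 : Finset (Set X)) : ℝ :=
  limsup (fun n => Real.log (coverNum 𝒰 (F n)) / (F n).card) atTop

/-- The topological entropy `h_top(X,G)`, the supremum over finite open covers. -/
noncomputable def topEnt (X : Type*) [MetricSpace X] [MulAction G X] (F : ℕ → Finset G) : ℝ≥0∞ :=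
  ⨆ (𝒰 : Finset (Set X)) (_ : IsFinOpenCover 𝒰), ENNReal.ofReal (coverTopEnt F 𝒰)

/-- `M(Z,𝒰,N,s,{F_n})`: infimum of `∑_{𝐔∈Λ} exp(-s m(𝐔))` over collections
`Λ ⊆ ⋃_{j≥N} 𝒲_{F_j}(𝒰)` covering `Z`; an element `𝐔 ∈ 𝒲_{F_j}(𝒰)` is encoded as a pair
`(j, u)` with `u g ∈ 𝒰` for `g ∈ F_j` (and `u g = ∅` elsewhere), `X(𝐔) = ⋂_{g∈F_j} g⁻¹ (u g)`
and `m(𝐔) = |F_j|`. -/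
noncomputable def covM (F : ℕ → Finset G) (𝒰 : Finset (Set X)) (Z : Set X) (N : ℕ) (s : ℝ) :
    ℝ≥0∞ :=
  ⨅ (Λ : Set (ℕ × (G → Set X)))
    (_ : ∀ p ∈ Λ, N ≤ p.1 ∧ (∀ g ∈ F p.1, p.2 g ∈ 𝒰) ∧ (∀ g ∉ F p.1, p.2 g = ∅))
    (_ : Z ⊆ ⋃ p ∈ Λ, ⋂ g ∈ F p.1, (fun y => g • y) ⁻¹' p.2 g),
    ∑' p : Λ, ENNReal.ofReal (Real.exp (-s * ((F (p : ℕ × (G → Set X)).1).card : ℝ)))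

/-- `M(Z,𝒰,s,{F_n}) = lim_{N→∞} M(Z,𝒰,N,s,{F_n})`. -/
noncomputable def covMtot (F : ℕ → Finset G) (𝒰 : Finset (Set X)) (Z : Set X) (s : ℝ) : ℝ≥0∞ :=
  ⨆ N : ℕ, covM F 𝒰 Z N s

/-- The cover-based Bowen topological entropy `h^B_top(𝒰,Z,{F_n}) = inf {s : M(Z,𝒰,s,{F_n}) = 0}`. -/
noncomputable def covBowenEnt (F : ℕ → Finset G) (𝒰 : Finset (Set X)) (Z : Set X) : ℝ≥0∞ :=
  ⨅ (s : ℝ) (_ : covMtot F 𝒰 Z s = 0), ENNReal.ofReal s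

/-- `diam(𝒰) = max {diam U : U ∈ 𝒰}`. -/
noncomputable def coverDiam (𝒰 : Finset (Set X)) : ℝ≥0∞ :=
  ⨆ U ∈ 𝒰, EMetric.diam U

end Defs

section MeasureDefs

variable [Group G] [MetricSpace X] [MulAction G X] [MeasurableSpace X]

/-- The quantity `-(1/m) log μ(B)`, with value `+∞` when `μ B = 0`. -/
noncomputable def locTerm (μ : Measure X) (B : Set X) (m : ℕ) : ℝ≥0∞ :=
  if μ B = 0 then ⊤ else ENNReal.ofReal (-(Real.log ((μ B).toReal)) / (m : ℝ))

/-- The lower local entropy `h̲_μ^{loc}(x,ε,{F_n}) = liminf_n -(1/|F_n|) log μ(B_{F_n}(x,ε))`. -/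
noncomputable def lowLoc (μ : Measure X) (F : ℕ → Finset G) (x : X) (ε : ℝ) : ℝ≥0∞ :=
  liminf (fun n => locTerm μ (bowenBall (F n) x ε) (F n).card) atTop

/-- The upper local entropy `limsup_n -(1/|F_n|) log μ(B_{F_n}(x,ε))`. -/
noncomputable def upLoc (μ : Measure X) (F : ℕ → Finset G) (x : X) (ε : ℝ) : ℝ≥0∞ :=
  limsup (fun n => locTerm μ (bowenBall (F n) x ε) (F n).card) atTop

/-- `h̲_μ^{loc}(x,{F_n}) = lim_{ε→0} h̲_μ^{loc}(x,ε,{F_n})` (a monotone limit, i.e. the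
supremum over `ε > 0`). -/
noncomputable def lowLocPt (μ : Measure X) (F : ℕ → Finset G) (x : X) : ℝ≥0∞ :=
  ⨆ (ε : ℝ) (_ : 0 < ε), lowLoc μ F x ε

/-- `h̲_μ^{loc}({F_n}) = ∫_X h̲_μ^{loc}(x,{F_n}) dμ(x)`. -/
noncomputable def lowLocEnt (μ : Measure X) (F : ℕ → Finset G) : ℝ≥0∞ :=
  ∫⁻ x, lowLocPt μ F x ∂μ

/-- A finite measurable partition of `X`, presented as `P : Fin k → Set X`. -/
def IsMeasPartition {k : ℕ} (P : Fin k → Set X) : Prop :=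
  (∀ i, MeasurableSet (P i)) ∧ Pairwise (Function.onFun Disjoint P) ∧ (⋃ i, P i) = Set.univ

/-- The static entropy `H_μ(𝒫_F)` of the join `𝒫_F = ⋁_{g∈F} g⁻¹𝒫`; its atoms are the
nonempty sets `⋂_{g∈F} g⁻¹ P(u g)` (distinct choices `u` yield disjoint atoms, and empty
atoms contribute `0`). -/
noncomputable def partH (μ : Measure X) {k : ℕ} (P : Fin k → Set X) (F : Finset G) : ℝ :=
  letI := Classical.decEq G
  ∑ u : (↥F → Fin k),
    Real.negMulLog ((μ (⋂ g : ↥F, (fun y => (g : G) • y) ⁻¹' P (u g))).toReal)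

/-- `h_μ(G,𝒫) = liminf_n (1/|F_n|) H_μ(𝒫_{F_n})`. -/
noncomputable def partEnt (μ : Measure X) (F : ℕ → Finset G) {k : ℕ} (P : Fin k → Set X) : ℝ :=
  liminf (fun n => partH μ P (F n) / (F n).card) atTop

/-- The measure-theoretic entropy `h_μ(X,G) = sup_𝒫 h_μ(G,𝒫)` (it is independent of the
Følner sequence used to compute it). -/
noncomputable def measEnt (μ : Measure X) (F : ℕ → Finset G) : ℝ≥0∞ :=
  ⨆ (k : ℕ) (P : Fin k → Set X) (_ : IsMeasPartition P), ENNReal.ofReal (partEnt μ F P)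

/-- Ergodicity of the `G`-action w.r.t. `μ`. -/
def IsErgodicGAction (G : Type*) [Group G] [MulAction G X] (μ : Measure X) : Prop :=
  ∀ A : Set X, MeasurableSet A → (∀ g : G, (g • ·) ⁻¹' A = A) → μ A = 0 ∨ μ A = 1

end MeasureDefs

section Covering
variable [Group G]

/-- The right translate `A c` of a finite set `A`. -/
def tl (A : Finset G) (c : G) : Finset G := A.map (mulRightEmbedding c)

lemma mem_tl {A : Finset G} {c g : G} : g ∈ tl A c ↔ ∃ a ∈ A, a * c = g := by
  simp [tl]

lemma mem_tl' {A : Finset G} {c g : G} : g ∈ tl A c ↔ g * c⁻¹ ∈ A := by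
  rw [mem_tl]
  constructor
  · rintro ⟨a, ha, rfl⟩; simpa using ha
  · intro h; exact ⟨_, h, by simp⟩

lemma card_tl (A : Finset G) (c : G) : (tl A c).card = A.card := by
  simp [tl]

variable [DecidableEq G]

lemma level_cover (A : Finset G) (η : ℝ) (h1 : η ≤ 1) (D : Finset G) :
    ∃ I ⊆ D, ∃ E : G → Finset G, (∀ c ∈ I, E c ⊆ tl A c) ∧
      (∀ c ∈ I, (1 - η) * (A.card : ℝ) ≤ (E c).card) ∧
      (∀ c ∈ I, ∀ c' ∈ I, c ≠ c' → Disjoint (E c) (E c')) ∧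
      I.biUnion E = I.biUnion (tl A) ∧
      ∀ c ∈ D, η * (A.card : ℝ) ≤ (tl A c ∩ I.biUnion E).card := by
  induction D using Finset.induction_on with
  | empty => exact ⟨∅, by simp, fun _ => ∅, by simp, by simp, by simp, by simp, by simp⟩
  | insert c D hc ih =>
    obtain ⟨I, hI, E, hE, hcard, hdis, hU, hcov⟩ := ih
    by_cases hh : η * (A.card : ℝ) ≤ (tl A c ∩ I.biUnion E).card
    · refine ⟨I, hI.trans (Finset.subset_insert _ _), E, hE, hcard, hdis, hU, ?_⟩
      intro c' hc'
      rcases Finset.mem_insert.1 hc' with rfl | h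
      · exact hh
      · exact hcov _ h
    · have hcI : c ∉ I := fun h => hc (hI h)
      set T := I.biUnion E with hT
      let E' : G → Finset G := fun c' => if c' = c then tl A c \ T else E c'
      have hE'c : E' c = tl A c \ T := by simp [E']
      have hE'I : ∀ c' ∈ I, E' c' = E c' := by
        intro c' h; have : c' ≠ c := fun e => hcI (e ▸ h)
        simp [E', this]
      have hbI : I.biUnion E' = T := Finset.biUnion_congr rfl hE'I
      have hb : (insert c I).biUnion E' = T ∪ tl A c := by
        rw [Finset.biUnion_insert, hE'c, hbI]; ext g; simp; tauto
      refine ⟨insert c I, Finset.insert_subset_insert _ hI, E', ?_, ?_, ?_, ?_, ?_⟩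
      · intro c' hc'
        rcases Finset.mem_insert.1 hc' with rfl | h
        · rw [hE'c]; exact Finset.sdiff_subset
        · rw [hE'I _ h]; exact hE _ h
      · intro c' hc'
        rcases Finset.mem_insert.1 hc' with rfl | h
        · rw [hE'c]
          have := Finset.card_sdiff_add_card_inter (tl A c') T
          rw [card_tl] at this
          have : ((tl A c' \ T).card : ℝ) + (tl A c' ∩ T).card = A.card := by exact_mod_cast this
          push Not at hh
          linarith
        · rw [hE'I _ h]; exact hcard _ h
      · intro a ha b hb' hab
        rcases Finset.mem_insert.1 ha with rfl | h <;> rcases Finset.mem_insert.1 hb' with rfl | h'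
        · exact absurd rfl hab
        · rw [hE'c, hE'I _ h']
          refine Finset.disjoint_left.2 fun g hg hg' => (Finset.mem_sdiff.1 hg).2 ?_
          exact Finset.mem_biUnion.2 ⟨b, h', hg'⟩
        · rw [hE'c, hE'I _ h]
          refine Finset.disjoint_left.2 fun g hg' hg => (Finset.mem_sdiff.1 hg).2 ?_
          exact Finset.mem_biUnion.2 ⟨a, h, hg'⟩
        · rw [hE'I _ h, hE'I _ h']; exact hdis _ h _ h' hab
      · rw [hb, Finset.biUnion_insert, hU, Finset.union_comm]
      · intro c' hc'
        rw [hb]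
        rcases Finset.mem_insert.1 hc' with rfl | h
        · rw [Finset.inter_eq_left.2 Finset.subset_union_right, card_tl]
          nlinarith [(Nat.cast_nonneg A.card : (0:ℝ) ≤ A.card)]
        · refine (hcov _ h).trans ?_
          exact_mod_cast Finset.card_le_card
            (Finset.inter_subset_inter_left Finset.subset_union_left)

lemma level_count (A : Finset G) (hA : A.Nonempty) (η : ℝ) (h0 : 0 < η) (D T : Finset G)
    (h : ∀ c ∈ D, η * (A.card : ℝ) ≤ (tl A c ∩ T).card) : (D.card : ℝ) ≤ 1 / η * T.card := by
  have hA' : (0 : ℝ) < A.card := by exact_mod_cast hA.card_pos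
  have h2 : ∑ c ∈ D, (tl A c ∩ T).card ≤ T.card * A.card := by
    have : ∀ c ∈ D, (tl A c ∩ T).card = ∑ t ∈ T, if t ∈ tl A c then 1 else 0 := by
      intro c _
      rw [Finset.inter_comm, ← Finset.filter_mem_eq_inter, Finset.card_filter]
    rw [Finset.sum_congr rfl this, Finset.sum_comm, ← smul_eq_mul]
    refine Finset.sum_le_card_nsmul _ _ _ fun t _ => ?_
    rw [← Finset.card_filter]
    refine Finset.card_le_card_of_injOn (fun c => t * c⁻¹) ?_ ?_
    · intro c hc
      simp only [Finset.coe_filter, Set.mem_ofPred_eq] at hc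
      exact mem_tl'.1 hc.2
    · intro a _ b _ hab; simpa using hab
  have h3 : (D.card : ℝ) * (η * A.card) ≤ T.card * A.card := by
    calc (D.card : ℝ) * (η * A.card) = ∑ c ∈ D, η * (A.card : ℝ) := by simp
      _ ≤ ∑ c ∈ D, ((tl A c ∩ T).card : ℝ) := Finset.sum_le_sum h
      _ ≤ T.card * A.card := by exact_mod_cast h2
  have h4 : (D.card : ℝ) * η ≤ T.card := by
    refine le_of_mul_le_mul_right ?_ hA'
    linarith
  rw [one_div, inv_mul_eq_div, le_div_iff₀ h0]; exact h4

lemma cover (F : ℕ → Finset G) (C : ℝ)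
    (hC : ∀ n : ℕ, ((⋃ k ∈ Finset.range n, ((F k : Set G)⁻¹ * (F n : Set G))).ncard : ℝ)
      ≤ C * (F n).card) (hC0 : 0 < C) (η : ℝ) (h0 : 0 < η) (h1 : η < 1) (M : ℕ) :
    ∀ (D : Finset G) (nn : G → ℕ), (∀ c ∈ D, nn c < M ∧ (F (nn c)).Nonempty) →
    ∃ I ⊆ D, ∃ E : G → Finset G, (∀ c ∈ I, E c ⊆ tl (F (nn c)) c) ∧
      (∀ c ∈ I, (1 - η) * ((F (nn c)).card : ℝ) ≤ (E c).card) ∧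
      (∀ c ∈ I, ∀ c' ∈ I, c ≠ c' → Disjoint (E c) (E c')) ∧
      I.biUnion E = I.biUnion (fun c => tl (F (nn c)) c) ∧
      (D.card : ℝ) ≤ (1 / η + C / (1 - η)) * (I.biUnion E).card := by
  induction M with
  | zero =>
    intro D nn hD
    have : D = ∅ := Finset.eq_empty_of_forall_notMem fun c hc => by simpa using (hD c hc).1
    subst this
    exact ⟨∅, by simp, fun _ => ∅, by simp, by simp, by simp, by simp, by simp⟩
  | succ M ih =>
    intro D nn hD
    set DM := D.filter (fun c => nn c = M) with hDM
    obtain ⟨I, hI, E, hE, hcard, hdis, hU, hcov⟩ := level_cover (F M) η h1.le DM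
    set T := I.biUnion E with hT
    set D' := D.filter (fun c => nn c ≠ M ∧ Disjoint (tl (F (nn c)) c) T) with hD'
    set De := D.filter (fun c => nn c ≠ M ∧ ¬ Disjoint (tl (F (nn c)) c) T) with hDe
    obtain ⟨I', hI', E', hE', hcard', hdis', hU', hcov'⟩ := ih D' nn (by
      intro c hc
      obtain ⟨a, b, _⟩ := Finset.mem_filter.1 hc
      have := hD c a
      exact ⟨by omega, this.2⟩)
    have hIM : ∀ c ∈ I, nn c = M := fun c hc => (Finset.mem_filter.1 (hI hc)).2
    have hIM' : ∀ c ∈ I', nn c ≠ M := fun c hc => (Finset.mem_filter.1 (hI' hc)).2.1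
    have hd : ∀ c ∈ I', Disjoint (tl (F (nn c)) c) T :=
      fun c hc => (Finset.mem_filter.1 (hI' hc)).2.2
    -- cardinalities
    have hTc : (T.card : ℝ) = ∑ c ∈ I, ((E c).card : ℝ) := by
      rw [hT, Finset.card_biUnion hdis]; push_cast; rfl
    have hcDM : (DM.card : ℝ) ≤ 1 / η * T.card := by
      by_cases hne : (F M).Nonempty
      · exact level_count _ hne η h0 _ _ hcov
      · have : DM = ∅ := Finset.eq_empty_of_forall_notMem fun c hc => by
          have h := Finset.mem_filter.1 hc
          exact hne (h.2 ▸ (hD c h.1).2)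
        rw [this]; simp; positivity
    have hcDe : (De.card : ℝ) ≤ C / (1 - η) * T.card := by
      set U : Finset G := (Finset.range M).biUnion fun k => (F k)⁻¹ * F M with hUdef
      have hUc : (U.card : ℝ) ≤ C * (F M).card := by
        have := hC M
        rwa [show (⋃ k ∈ Finset.range M, ((F k : Set G)⁻¹ * (F M : Set G))) = (U : Set G) by
          simp [hUdef], Set.ncard_coe_finset] at this
      have hsub : De ⊆ I.biUnion fun c => tl U c := by
        intro c hc
        obtain ⟨hcD, hne, hnd⟩ := Finset.mem_filter.1 hc
        obtain ⟨g, hg, hgT⟩ := Finset.not_disjoint_iff.1 hnd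
        rw [hU] at hgT
        obtain ⟨ci, hci, hgi⟩ := Finset.mem_biUnion.1 hgT
        obtain ⟨a, ha, rfl⟩ := mem_tl.1 hg
        obtain ⟨b, hb, hbe⟩ := mem_tl.1 hgi
        refine Finset.mem_biUnion.2 ⟨ci, hci, mem_tl.2 ⟨a⁻¹ * b, ?_, ?_⟩⟩
        · refine Finset.mem_biUnion.2 ⟨nn c, Finset.mem_range.2 ?_, ?_⟩
          · have := (hD c hcD).1; omega
          · exact Finset.mul_mem_mul (Finset.inv_mem_inv ha) hb
        · rw [mul_assoc, hbe]; simp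
      have e1 : (De.card : ℝ) ≤ ∑ c ∈ I, (C * (F M).card) := by
        calc (De.card : ℝ) ≤ ((I.biUnion fun c => tl U c).card : ℝ) := by
              exact_mod_cast Finset.card_le_card hsub
          _ ≤ ∑ c ∈ I, ((tl U c).card : ℝ) := by exact_mod_cast Finset.card_biUnion_le
          _ ≤ _ := Finset.sum_le_sum fun c _ => by rw [card_tl]; exact hUc
      refine e1.trans ?_
      rw [hTc, Finset.mul_sum]
      refine Finset.sum_le_sum fun c hc => ?_
      have h1η : 0 < 1 - η := by linarith
      have := hcard c hc
      rw [div_mul_eq_mul_div, le_div_iff₀ h1η]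
      nlinarith
    have hDc : D.card ≤ DM.card + De.card + D'.card := by
      have : D ⊆ DM ∪ De ∪ D' := by
        intro c hc
        simp only [hDM, hDe, hD', Finset.mem_union, Finset.mem_filter, hc, true_and]
        tauto
      exact (Finset.card_le_card this).trans ((Finset.card_union_le _ _).trans
        (Nat.add_le_add_right (Finset.card_union_le _ _) _))
    have hDc' : (D.card : ℝ) ≤ DM.card + De.card + D'.card := by exact_mod_cast hDc
    let E2 : G → Finset G := fun c => if nn c = M then E c else E' c
    have hE2 : ∀ c ∈ I, E2 c = E c := fun c hc => by simp [E2, hIM c hc]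
    have hE2' : ∀ c ∈ I', E2 c = E' c := fun c hc => by simp [E2, hIM' c hc]
    have hb : (I ∪ I').biUnion E2 = T ∪ I'.biUnion E' := by
      rw [Finset.union_biUnion]
      rw [Finset.biUnion_congr rfl hE2, Finset.biUnion_congr rfl hE2']
    have hTd : Disjoint T (I'.biUnion E') := by
      rw [Finset.disjoint_biUnion_right]
      intro c hc
      exact ((hd c hc).mono_left (hE' c hc)).symm
    refine ⟨I ∪ I', ?_, E2, ?_, ?_, ?_, ?_, ?_⟩
    · exact Finset.union_subset (hI.trans (Finset.filter_subset _ _))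
        (hI'.trans (Finset.filter_subset _ _))
    · intro c hc
      rcases Finset.mem_union.1 hc with h | h
      · rw [hE2 c h, hIM c h]; exact hE c h
      · rw [hE2' c h]; exact hE' c h
    · intro c hc
      rcases Finset.mem_union.1 hc with h | h
      · rw [hE2 c h, hIM c h]; exact hcard c h
      · rw [hE2' c h]; exact hcard' c h
    · have key : ∀ c ∈ I, ∀ c' ∈ I', Disjoint (E c) (E' c') := fun c hc c' hc' =>
        hTd.mono (Finset.subset_biUnion_of_mem E hc) (Finset.subset_biUnion_of_mem E' hc')
      intro a ha b hb' hab
      rcases Finset.mem_union.1 ha with h | h <;> rcases Finset.mem_union.1 hb' with h' | h'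
      · rw [hE2 a h, hE2 b h']; exact hdis _ h _ h' hab
      · rw [hE2 a h, hE2' b h']; exact key _ h _ h'
      · rw [hE2' a h, hE2 b h']; exact (key _ h' _ h).symm
      · rw [hE2' a h, hE2' b h']; exact hdis' _ h _ h' hab
    · rw [hb, hU', hU, Finset.union_biUnion]
      congr 1
      exact Finset.biUnion_congr rfl fun c hc => by rw [hIM c hc]
    · rw [hb, Finset.card_union_of_disjoint hTd]
      push_cast
      nlinarith

end Covering

section Ergodic
variable [Group G]

lemma fol_tendsto [DecidableEq G] {F : ℕ → Finset G} (hF : IsFolnerSeq F) (g : G) :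
    Tendsto (fun n => (((F n).filter (fun f => g * f ∉ F n)).card : ℝ) / (F n).card) atTop (𝓝 0) := by
  refine squeeze_zero (fun n => by positivity) (fun n => ?_) (hF g)
  refine div_le_div_of_nonneg_right ?_ (Nat.cast_nonneg _)
  refine Nat.cast_le.2 ?_
  rw [← Set.ncard_coe_finset]
  refine Set.ncard_le_ncard_of_injOn (fun f => g * f) ?_ (fun a _ b _ h => mul_left_cancel h) ?_
  · intro f hf
    simp only [Finset.coe_filter, Set.mem_ofPred_eq] at hf
    exact Or.inr ⟨⟨f, hf.1, rfl⟩, hf.2⟩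
  · exact ((F n).finite_toSet.symmDiff ((F n).finite_toSet.image _))

variable [MulAction G X]

/-- The ergodic average of `f` along a finite set. -/
noncomputable def av (A : Finset G) (f : X → ℝ) (x : X) : ℝ :=
  (∑ g ∈ A, f (g • x)) / A.card

lemma av_coboundary [DecidableEq G] {F : ℕ → Finset G} (hF : IsFolnerSeq F) (h : X → ℝ) (M : ℝ)
    (hM : ∀ x, |h x| ≤ M) (g : G) (x : X) :
    Tendsto (fun n => av (F n) (fun y => h y - h (g • y)) x) atTop (𝓝 0) := by
  have h1 := ((fol_tendsto hF g).add (fol_tendsto hF g⁻¹)).const_mul M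
  simp only [add_zero, mul_zero] at h1
  refine squeeze_zero_norm (fun n => ?_) h1
  set A := F n
  set B := A.map (mulLeftEmbedding g) with hB
  have e1 : ∑ f ∈ A, h (g • f • x) = ∑ f ∈ B, h (f • x) := by
    rw [hB, Finset.sum_map]; simp [mul_smul]
  have e2 : (B \ A).card ≤ (A.filter (fun f => g * f ∉ A)).card := by
    refine Finset.card_le_card_of_injOn (fun f => g⁻¹ * f) ?_ (fun a _ b _ h => mul_left_cancel h)
    intro f hf
    simp only [hB, Finset.coe_sdiff, Set.mem_sdiff, Finset.mem_coe, Finset.mem_map,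
      mulLeftEmbedding_apply] at hf
    obtain ⟨⟨a, ha, rfl⟩, h2⟩ := hf
    simp [ha, h2]
  have e3 : (A \ B).card ≤ (A.filter (fun f => g⁻¹ * f ∉ A)).card := by
    refine Finset.card_le_card fun f hf => ?_
    simp only [hB, Finset.mem_sdiff, Finset.mem_map, mulLeftEmbedding_apply] at hf
    refine Finset.mem_filter.2 ⟨hf.1, fun h => hf.2 ⟨_, h, by simp⟩⟩
  have hM0 : 0 ≤ M := (abs_nonneg _).trans (hM x)
  have bd : ∀ S : Finset G, |∑ f ∈ S, h (f • x)| ≤ M * S.card := by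
    intro S
    refine (Finset.abs_sum_le_sum_abs _ _).trans ?_
    refine (Finset.sum_le_card_nsmul _ _ M fun f _ => hM _).trans ?_
    rw [nsmul_eq_mul, mul_comm]
  have e4 : |∑ f ∈ A, h (f • x) - ∑ f ∈ B, h (f • x)| ≤
      M * ((A.filter (fun f => g * f ∉ A)).card + (A.filter (fun f => g⁻¹ * f ∉ A)).card) := by
    rw [← Finset.sum_sdiff_sub_sum_sdiff]
    refine (abs_sub _ _).trans ?_
    have a1 := bd (A \ B)
    have a2 := bd (B \ A)
    have b1 : ((B \ A).card : ℝ) ≤ (A.filter (fun f => g * f ∉ A)).card := by exact_mod_cast e2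
    have b2 : ((A \ B).card : ℝ) ≤ (A.filter (fun f => g⁻¹ * f ∉ A)).card := by exact_mod_cast e3
    nlinarith
  rw [av, Finset.sum_sub_distrib, e1, Real.norm_eq_abs, abs_div, Nat.abs_cast, ← add_div,
    ← mul_div_assoc]
  exact div_le_div_of_nonneg_right e4 (Nat.cast_nonneg _)

lemma av_add (A : Finset G) (f h : X → ℝ) (x : X) :
    av A (fun y => f y + h y) x = av A f x + av A h x := by
  simp [av, Finset.sum_add_distrib, add_div]

lemma av_smul (A : Finset G) (f : X → ℝ) (c : ℝ) (x : X) :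
    av A (fun y => c * f y) x = c * av A f x := by
  simp [av, ← Finset.mul_sum, mul_div_assoc]

variable [MeasurableSpace X]

lemma ae_const_of_inv [Countable G] [MeasurableConstSMul G X] (μ : Measure X)
    [IsProbabilityMeasure μ] (herg : IsErgodicGAction G μ)
    (v : X → ℝ) (hv : Measurable v) (hinv : ∀ g : G, (fun x => v (g • x)) =ᵐ[μ] v) :
    ∃ c, v =ᵐ[μ] Function.const X c := by
  refine exists_eventuallyEq_const_of_forall_separating MeasurableSet fun U hU => ?_
  set A : Set X := ⋂ g : G, (fun x => v (g • x)) ⁻¹' U with hA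
  have hAm : MeasurableSet A := MeasurableSet.iInter fun g =>
    (hv.comp (measurable_const_smul g)) hU
  have hAinv : ∀ g : G, (g • ·) ⁻¹' A = A := by
    intro g
    ext x
    simp only [hA, Set.mem_preimage, Set.mem_iInter]
    constructor
    · intro h k
      have := h (k * g⁻¹)
      simpa [smul_smul] using this
    · intro h k
      have := h (k * g)
      simpa [smul_smul] using this
  have hall : ∀ᵐ x ∂μ, ∀ g : G, v (g • x) = v x := ae_all_iff.2 hinv
  have hiff : ∀ᵐ x ∂μ, (x ∈ A ↔ v x ∈ U) := by
    filter_upwards [hall] with x hx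
    simp only [hA, Set.mem_iInter, Set.mem_preimage]
    constructor
    · intro h; rw [← hx 1]; exact h 1
    · intro h g; rw [hx g]; exact h
  rcases herg A hAm hAinv with h | h
  · right
    have : ∀ᵐ x ∂μ, x ∉ A := measure_eq_zero_iff_ae_notMem.1 h
    filter_upwards [this, hiff] with x h1 h2 using fun h => h1 (h2.2 h)
  · left
    have : ∀ᵐ x ∂μ, x ∈ A := by
      exact (mem_ae_iff_prob_eq_one₀ hAm.nullMeasurableSet).2 h
    filter_upwards [this, hiff] with x h1 h2 using h2.1 h1

lemma mean_approx [Countable G] [MeasurableConstSMul G X] (μ : Measure X)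
    [IsProbabilityMeasure μ] [SMulInvariantMeasure G X μ] (herg : IsErgodicGAction G μ)
    {F : ℕ → Finset G} (hF : IsFolnerSeq F)
    (f : X → ℝ) (hf : Measurable f) (M : ℝ) (hM : ∀ x, |f x| ≤ M) (ε : ℝ) (hε : 0 < ε) :
    ∃ u : X → ℝ, Measurable u ∧ (∀ x, |u x| ≤ M) ∧ ∫ x, |u x - ∫ y, f y ∂μ| ∂μ < ε ∧
      ∀ x, Tendsto (fun n => av (F n) (fun y => f y - u y) x) atTop (𝓝 0) := by
  classical
  have hmp : ∀ g : G, MeasurePreserving (fun x : X => g • x) μ μ := fun g => measurePreserving_smul g μ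
  have memb : ∀ u : X → ℝ, Measurable u → (∀ x, |u x| ≤ M) → MemLp u 2 μ := fun u hu hb =>
    MemLp.of_bound hu.aestronglyMeasurable M (Eventually.of_forall hb)
  have hfL : MemLp f 2 μ := memb f hf hM
  let U : G → Lp ℝ 2 μ →ₗᵢ[ℝ] Lp ℝ 2 μ := fun g => Lp.compMeasurePreservingₗᵢ ℝ (fun x : X => g • x) (hmp g)
  let O : Set (Lp ℝ 2 μ) := Set.range fun g : G => U g (hfL.toLp f)
  let S : Set (Lp ℝ 2 μ) := {w | ∃ u : X → ℝ, Measurable u ∧ (∀ x, |u x| ≤ M) ∧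
    w =ᵐ[μ] u ∧ ∫ x, u x ∂μ = ∫ x, f x ∂μ ∧
    ∀ x, Tendsto (fun n => av (F n) (fun y => f y - u y) x) atTop (𝓝 0)}
  have hOS : O ⊆ S := by
    rintro _ ⟨g, rfl⟩
    refine ⟨fun x => f (g • x), hf.comp (measurable_const_smul g), fun x => hM _, ?_, ?_, ?_⟩
    · have h1 : (U g (hfL.toLp f) : X → ℝ) =ᵐ[μ] (hfL.toLp f) ∘ (fun x => g • x) :=
        Lp.coeFn_compMeasurePreserving _ (hmp g)
      exact h1.trans ((hmp g).quasiMeasurePreserving.ae_eq_comp hfL.coeFn_toLp)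
    · exact integral_smul_eq_self f
    · exact av_coboundary hF f M hM g
  have hSconv : Convex ℝ S := by
    rintro w1 ⟨u1, m1, b1, e1, i1, t1⟩ w2 ⟨u2, m2, b2, e2, i2, t2⟩ a b ha hb hab
    refine ⟨fun x => a * u1 x + b * u2 x, by fun_prop, ?_, ?_, ?_, ?_⟩
    · intro x
      refine (abs_add_le _ _).trans ?_
      rw [abs_mul, abs_mul, abs_of_nonneg ha, abs_of_nonneg hb]
      have := b1 x; have := b2 x
      calc a * |u1 x| + b * |u2 x| ≤ a * M + b * M := by gcongr <;> assumption
        _ = M := by rw [← add_mul, hab, one_mul]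
    · filter_upwards [Lp.coeFn_add (a • w1) (b • w2), Lp.coeFn_smul a w1, Lp.coeFn_smul b w2, e1, e2]
        with x h1 h2 h3 h4 h5
      rw [h1, Pi.add_apply, h2, h3, Pi.smul_apply, Pi.smul_apply, h4, h5]; rfl
    · have j1 : Integrable u1 μ := (memb u1 m1 b1).integrable (by norm_num)
      have j2 : Integrable u2 μ := (memb u2 m2 b2).integrable (by norm_num)
      rw [integral_add (j1.const_mul a) (j2.const_mul b), integral_const_mul, integral_const_mul,
        i1, i2, ← add_mul, hab, one_mul]
    · intro x
      have := ((t1 x).const_mul a).add ((t2 x).const_mul b)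
      simp only [mul_zero, add_zero] at this
      refine this.congr fun n => ?_
      rw [← av_smul, ← av_smul, ← av_add]
      congr 1
      ext y
      have : f y = (a + b) * f y := by rw [hab, one_mul]
      rw [this]; ring_nf
      rw [show b = 1 - a by linarith]; ring
  set K : Set (Lp ℝ 2 μ) := closure (convexHull ℝ O) with hK
  have hKc : Convex ℝ K := (convex_convexHull ℝ O).closure
  have hKne : K.Nonempty := ⟨U 1 (hfL.toLp f), subset_closure (subset_convexHull ℝ O ⟨1, rfl⟩)⟩
  obtain ⟨v, hvK, hv⟩ := exists_norm_eq_iInf_of_complete_convex hKne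
    isClosed_closure.isComplete hKc 0
  have hv' := (norm_eq_iInf_iff_real_inner_le_zero hKc hvK).1 hv
  have hUK : ∀ g : G, ∀ w ∈ K, U g w ∈ K := by
    intro g w hw
    have h1 : U g '' O ⊆ O := by
      rintro _ ⟨_, ⟨k, rfl⟩, rfl⟩
      refine ⟨k * g, ?_⟩
      refine Lp.ext ?_
      have a1 : (U (k * g) (hfL.toLp f) : X → ℝ) =ᵐ[μ] (hfL.toLp f) ∘ (fun x => (k * g) • x) :=
        Lp.coeFn_compMeasurePreserving _ (hmp _)
      have a2 : (U g (U k (hfL.toLp f)) : X → ℝ) =ᵐ[μ] (U k (hfL.toLp f)) ∘ (fun x => g • x) :=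
        Lp.coeFn_compMeasurePreserving _ (hmp _)
      have a3 : (U k (hfL.toLp f) : X → ℝ) =ᵐ[μ] (hfL.toLp f) ∘ (fun x => k • x) :=
        Lp.coeFn_compMeasurePreserving _ (hmp _)
      have a4 := (hmp g).quasiMeasurePreserving.ae_eq_comp a3
      refine a1.trans ((a2.trans a4).trans ?_).symm
      refine Eventually.of_forall fun x => ?_
      simp [Function.comp, mul_smul]
    have h2 : U g '' K ⊆ K := by
      refine (image_closure_subset_closure_image (U g).continuous).trans (closure_mono ?_)
      have := (U g).toLinearMap.image_convexHull O
      have h3 : (U g : Lp ℝ 2 μ → Lp ℝ 2 μ) '' (convexHull ℝ O) = convexHull ℝ (U g '' O) := this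
      rw [h3]
      exact convexHull_mono h1
    exact h2 ⟨w, hw, rfl⟩
  have hfix : ∀ g : G, U g v = v := by
    intro g
    have h1 := hv' _ (hUK g v hvK)
    have h2 : ‖U g v‖ = ‖v‖ := (U g).norm_map v
    have h3 := norm_sub_sq_real (U g v) v
    have h4 : ‖U g v - v‖ ^ 2 ≤ 0 := by
      rw [h3, h2]
      rw [zero_sub, inner_neg_left, inner_sub_right, real_inner_self_eq_norm_sq,
        real_inner_comm] at h1
      linarith
    have h5 : ‖U g v - v‖ = 0 := by
      have := sq_nonneg ‖U g v - v‖
      exact pow_eq_zero_iff (two_ne_zero) |>.1 (le_antisymm h4 this)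
    exact sub_eq_zero.1 (norm_eq_zero.1 h5)
  obtain ⟨c, hc⟩ := ae_const_of_inv (G := G) μ herg v (Lp.stronglyMeasurable v).measurable (by
    intro g
    have a2 : (U g v : X → ℝ) =ᵐ[μ] v ∘ (fun x => g • x) :=
        Lp.coeFn_compMeasurePreserving _ (hmp _)
    rw [hfix g] at a2
    exact a2.symm)
  obtain ⟨w, hw, hwd⟩ := Metric.mem_closure_iff.1 hvK (ε / 2) (by positivity)
  obtain ⟨u, mu, bu, eu, iu, tu⟩ := (convexHull_min hOS hSconv) hw
  have huL := memb u mu bu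
  have hul : Integrable u μ := huL.integrable (by norm_num)
  have key : ∫ x, |u x - c| ∂μ < ε / 2 := by
    have hcL : MemLp (fun _ : X => c) 2 μ := memLp_const c
    have e1 : v - w =ᵐ[μ] fun x => c - u x := by
      filter_upwards [Lp.coeFn_sub v w, hc, eu] with x h1 h2 h3
      rw [h1, Pi.sub_apply, h2, h3]; rfl
    have e2 : dist v w = (eLpNorm (fun x => c - u x) 2 μ).toReal := by
      rw [dist_eq_norm, Lp.norm_def, eLpNorm_congr_ae e1]
    have hm : AEStronglyMeasurable (fun x => c - u x) μ := by fun_prop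
    have e3 : eLpNorm (fun x => c - u x) 1 μ ≤ eLpNorm (fun x => c - u x) 2 μ :=
      eLpNorm_le_eLpNorm_of_exponent_le (by norm_num) hm
    have e4 : ∫ x, |u x - c| ∂μ = (eLpNorm (fun x => c - u x) 1 μ).toReal := by
      rw [eLpNorm_one_eq_lintegral_enorm, ← integral_norm_eq_lintegral_enorm hm]
      exact integral_congr_ae (Eventually.of_forall fun x => by
        simp only [Real.norm_eq_abs]; exact abs_sub_comm _ _)
    rw [e4]
    refine lt_of_le_of_lt ?_ hwd
    rw [e2]
    exact ENNReal.toReal_mono (hcL.sub huL).eLpNorm_ne_top e3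
  refine ⟨u, mu, bu, ?_, tu⟩
  have hcf : |c - ∫ y, f y ∂μ| < ε / 2 := by
    refine lt_of_le_of_lt ?_ key
    rw [← iu]
    have : c - ∫ x, u x ∂μ = ∫ x, (c - u x) ∂μ := by
      rw [integral_sub (integrable_const _) hul]; simp
    rw [this]
    refine (abs_integral_le_integral_abs).trans (le_of_eq ?_)
    exact integral_congr_ae (Eventually.of_forall fun x => abs_sub_comm _ _)
  calc ∫ x, |u x - ∫ y, f y ∂μ| ∂μ ≤ ∫ x, (|u x - c| + |c - ∫ y, f y ∂μ|) ∂μ := by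
        refine integral_mono ((hul.sub (integrable_const _)).abs)
          (((hul.sub (integrable_const _)).abs).add (integrable_const _)) fun x => ?_
        exact abs_sub_le _ _ _
    _ = ∫ x, |u x - c| ∂μ + |c - ∫ y, f y ∂μ| := by
        have i1 : Integrable (fun x => |u x - c|) μ := (hul.sub (integrable_const _)).abs
        rw [integral_add i1 (integrable_const _)]; simp
    _ < ε := by linarith

end Ergodic

section Maximal
set_option linter.unusedSectionVars false
variable [Group G]

lemma fol_bad [DecidableEq G] {F : ℕ → Finset G} (hF : IsFolnerSeq F) (K : Finset G) (ε : ℝ)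
    (hε : 0 < ε) : ∀ᶠ N in atTop,
      ∑ k ∈ K, (((F N).filter (fun f => k * f ∉ F N)).card : ℝ) ≤ ε * (F N).card := by
  have h1 : Tendsto (fun n => ∑ k ∈ K, (((F n).filter (fun f => k * f ∉ F n)).card : ℝ) / (F n).card)
      atTop (𝓝 (∑ k ∈ K, (0:ℝ))) := tendsto_finsetSum _ fun k _ => fol_tendsto hF k
  rw [Finset.sum_const_zero] at h1
  filter_upwards [h1.eventually_lt_const hε] with n hn
  rcases (F n).eq_empty_or_nonempty with h | h
  · simp [h]
  · have : (0:ℝ) < (F n).card := by exact_mod_cast h.card_pos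
    rw [← Finset.sum_div, div_lt_iff₀ this] at hn
    exact hn.le

lemma bad_card [DecidableEq G] (K A : Finset G) :
    ((A.filter (fun f => ∃ k ∈ K, k * f ∉ A)).card : ℝ) ≤
      ∑ k ∈ K, ((A.filter (fun f => k * f ∉ A)).card : ℝ) := by
  have : A.filter (fun f => ∃ k ∈ K, k * f ∉ A) ⊆ K.biUnion fun k => A.filter (fun f => k * f ∉ A) := by
    intro f hf
    simp only [Finset.mem_filter, Finset.mem_biUnion] at hf ⊢
    obtain ⟨h1, k, hk, h2⟩ := hf
    exact ⟨k, hk, h1, h2⟩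
  have h2 := (Finset.card_le_card this).trans Finset.card_biUnion_le
  exact_mod_cast h2

lemma mul_sdiff_card [DecidableEq G] (K A : Finset G) :
    (((K * A) \ A).card : ℝ) ≤ ∑ k ∈ K, ((A.filter (fun f => k * f ∉ A)).card : ℝ) := by
  have : (K * A) \ A ⊆ K.biUnion fun k => (A.filter (fun f => k * f ∉ A)).image (fun f => k * f) := by
    intro f hf
    obtain ⟨h1, h2⟩ := Finset.mem_sdiff.1 hf
    obtain ⟨k, hk, a, ha, rfl⟩ := Finset.mem_mul.1 h1
    exact Finset.mem_biUnion.2 ⟨k, hk, Finset.mem_image.2 ⟨a, Finset.mem_filter.2 ⟨ha, h2⟩, rfl⟩⟩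
  have h2 := (Finset.card_le_card this).trans Finset.card_biUnion_le
  have h3 := h2.trans (Finset.sum_le_sum fun k _ => Finset.card_image_le)
  exact_mod_cast h3

variable [MulAction G X]

lemma sum_tl (A : Finset G) (c : G) (r : G → ℝ) : ∑ g ∈ tl A c, r g = ∑ g ∈ A, r (g * c) := by
  simp [tl]

variable [MeasurableSpace X]

lemma integral_sum_smul [MeasurableConstSMul G X] (μ : Measure X) [SMulInvariantMeasure G X μ]
    (A : Finset G) (f : X → ℝ) (hf : Integrable f μ) :
    ∫ x, ∑ g ∈ A, f (g • x) ∂μ = A.card * ∫ x, f x ∂μ := by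
  rw [integral_finsetSum]
  · rw [Finset.sum_congr rfl (fun g _ => integral_smul_eq_self f (g := g)), Finset.sum_const,
      nsmul_eq_mul]
  · intro g _
    exact (measurePreserving_smul g μ).integrable_comp_of_integrable hf

lemma integrable_sum_smul [MeasurableConstSMul G X] (μ : Measure X) [SMulInvariantMeasure G X μ]
    (A : Finset G) (f : X → ℝ) (hf : Integrable f μ) :
    Integrable (fun x => ∑ g ∈ A, f (g • x)) μ :=
  integrable_finsetSum _ fun g _ => (measurePreserving_smul g μ).integrable_comp_of_integrable hf

lemma measurable_av [MeasurableConstSMul G X] (A : Finset G) (f : X → ℝ) (hf : Measurable f) :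
    Measurable (av A f) := by
  unfold av
  exact (Finset.measurable_fun_sum _ fun g _ => hf.comp (measurable_const_smul g)).div_const _

lemma maximal [MeasurableConstSMul G X] (μ : Measure X)
    [IsProbabilityMeasure μ] [SMulInvariantMeasure G X μ]
    {F : ℕ → Finset G} (hF : IsFolnerSeq F) (hT : IsTemperedSeq F)
    (hne : ∀ᶠ n in atTop, (F n).Nonempty) (M lam : ℝ) (hM : 0 < M) (hl : 0 < lam) :
    ∃ κ : ℝ, 0 < κ ∧ ∀ r : X → ℝ, Measurable r → (∀ x, 0 ≤ r x) → (∀ x, r x ≤ M) →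
      μ.real {x | ∃ n, lam < av (F n) r x} ≤ κ * ∫ x, r x ∂μ := by
  classical
  obtain ⟨C, hC0, hC⟩ := hT
  set η : ℝ := min (1/2) (lam / (2 * M)) with hη
  have h0 : 0 < η := lt_min (by norm_num) (by positivity)
  have h1 : η < 1 := (min_le_left _ _).trans_lt (by norm_num)
  have hMη : M * η ≤ lam / 2 := by
    have : η ≤ lam / (2 * M) := min_le_right _ _
    calc M * η ≤ M * (lam / (2 * M)) := by gcongr
      _ = lam / 2 := by field_simp
  set κ : ℝ := 1 / η + C / (1 - η) with hκ
  have hκ0 : 0 < κ := by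
    have : 0 < 1 - η := by linarith
    positivity
  refine ⟨κ * (2 / lam) * 2, by positivity, fun r hr hr0 hrM => ?_⟩
  have hri : Integrable r μ := Integrable.of_bound hr.aestronglyMeasurable M
    (Eventually.of_forall fun x => by rw [Real.norm_eq_abs, abs_of_nonneg (hr0 x)]; exact hrM x)
  set E : ℕ → Set X := fun m => {x | ∃ n, n < m ∧ lam < av (F n) r x} with hE
  have hEm : ∀ m, MeasurableSet (E m) := by
    intro m
    have : E m = ⋃ n ∈ Finset.range m, {x | lam < av (F n) r x} := by
      ext x; simp [hE]
    rw [this]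
    exact Finset.measurableSet_biUnion _ fun n _ => measurableSet_lt measurable_const (measurable_av _ _ hr)
  have hEU : {x | ∃ n, lam < av (F n) r x} = ⋃ m, E m := by
    ext x
    simp only [Set.mem_ofPred_eq, Set.mem_iUnion, hE]
    exact ⟨fun ⟨n, h⟩ => ⟨n+1, n, by omega, h⟩, fun ⟨m, n, _, h⟩ => ⟨n, h⟩⟩
  have hmono : Monotone E := fun a b hab x ⟨n, h, h'⟩ => ⟨n, by omega, h'⟩
  have main : ∀ m, μ.real (E m) ≤ κ * (2 / lam) * 2 * ∫ x, r x ∂μ := by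
    intro m
    set K : Finset G := (Finset.range m).biUnion F with hK
    obtain ⟨N, hN1, hN2⟩ := ((fol_bad hF K 1 one_pos).and hne).exists
    have hNpos : (0:ℝ) < (F N).card := by exact_mod_cast hN2.card_pos
    set F' : Finset G := F N ∪ (K * F N)
    have hF'c : (F'.card : ℝ) ≤ 2 * (F N).card := by
      have e : F' = F N ∪ ((K * F N) \ F N) := by simp [F']
      have e1 : F'.card ≤ (F N).card + ((K * F N) \ F N).card := by
        rw [e]; exact Finset.card_union_le _ _
      have e1' : (F'.card : ℝ) ≤ (F N).card + ((K * F N) \ F N).card := by exact_mod_cast e1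
      have := mul_sdiff_card K (F N)
      linarith
    have pt : ∀ x, ∑ c ∈ F N, (E m).indicator (fun _ => (1:ℝ)) (c • x) ≤
        κ * (2 / lam) * ∑ g ∈ F', r (g • x) := by
      intro x
      set D := (F N).filter (fun c => c • x ∈ E m) with hD
      have hsum : ∑ c ∈ F N, (E m).indicator (fun _ => (1:ℝ)) (c • x) = D.card := by
        rw [hD, Finset.card_filter]
        push_cast
        refine Finset.sum_congr rfl fun c _ => ?_
        simp [Set.indicator_apply]
      have hex : ∀ c : G, ∃ n, c ∈ D → n < m ∧ lam < av (F n) r (c • x) := by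
        intro c
        by_cases hc : c ∈ D
        · obtain ⟨n, h⟩ := (Finset.mem_filter.1 hc).2
          exact ⟨n, fun _ => h⟩
        · exact ⟨0, fun h => absurd h hc⟩
      choose nn hnn using hex
      have hnne : ∀ c ∈ D, (F (nn c)).Nonempty := by
        intro c hc
        by_contra h
        rw [Finset.not_nonempty_iff_eq_empty] at h
        have := (hnn c hc).2
        simp [av, h] at this
        linarith
      obtain ⟨I, hID, EE, hEs, hEc, hEd, hEU, hDc⟩ := cover F C hC hC0 η h0 h1 m D nn
        (fun c hc => ⟨(hnn c hc).1, hnne c hc⟩)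
      rw [hsum]
      refine hDc.trans ?_
      rw [mul_assoc]
      refine mul_le_mul_of_nonneg_left ?_ hκ0.le
      have hstep : ∀ c ∈ I, lam / 2 * ((EE c).card : ℝ) ≤ ∑ g ∈ EE c, r (g • x) := by
        intro c hc
        have hpos : (0:ℝ) < (F (nn c)).card := by exact_mod_cast (hnne c (hID hc)).card_pos
        have a1 := (hnn c (hID hc)).2
        rw [av, lt_div_iff₀ hpos] at a1
        have a2 : ∑ g ∈ tl (F (nn c)) c, r (g • x) = ∑ g ∈ F (nn c), r (g • c • x) := by
          rw [sum_tl]; simp [mul_smul]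
        have a3 := Finset.sum_sdiff (f := fun g => r (g • x)) (hEs c hc)
        have a4 : ∑ g ∈ tl (F (nn c)) c \ EE c, r (g • x) ≤ M * (η * (F (nn c)).card) := by
          have b1 : ∑ g ∈ tl (F (nn c)) c \ EE c, r (g • x) ≤ (tl (F (nn c)) c \ EE c).card • M :=
            Finset.sum_le_card_nsmul _ _ _ fun g _ => hrM _
          rw [nsmul_eq_mul, mul_comm] at b1
          refine b1.trans (mul_le_mul_of_nonneg_left ?_ hM.le)
          have b2 := Finset.card_sdiff_add_card_eq_card (hEs c hc)
          rw [card_tl] at b2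
          have b3 : (((tl (F (nn c)) c \ EE c).card : ℝ)) + (EE c).card = (F (nn c)).card := by
            exact_mod_cast b2
          have := hEc c hc
          linarith
        have a5 : ((EE c).card : ℝ) ≤ (F (nn c)).card := by
          have := Finset.card_le_card (hEs c hc)
          rw [card_tl] at this
          exact_mod_cast this
        nlinarith
      have hcardU : ((I.biUnion EE).card : ℝ) = ∑ c ∈ I, ((EE c).card : ℝ) := by
        rw [Finset.card_biUnion hEd]; push_cast; rfl
      have hsU : ∑ g ∈ I.biUnion EE, r (g • x) = ∑ c ∈ I, ∑ g ∈ EE c, r (g • x) :=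
        Finset.sum_biUnion hEd
      have hsub : I.biUnion EE ⊆ F' := by
        intro g hg
        obtain ⟨c, hc, hgc⟩ := Finset.mem_biUnion.1 hg
        obtain ⟨a, ha, rfl⟩ := mem_tl.1 (hEs c hc hgc)
        refine Finset.mem_union_right _ (Finset.mul_mem_mul ?_ (Finset.mem_filter.1 (hID hc)).1)
        exact Finset.mem_biUnion.2 ⟨nn c, Finset.mem_range.2 (hnn c (hID hc)).1, ha⟩
      have h4 : ∑ g ∈ I.biUnion EE, r (g • x) ≤ ∑ g ∈ F', r (g • x) :=
        Finset.sum_le_sum_of_subset_of_nonneg hsub fun g _ _ => hr0 _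
      have h5 := Finset.sum_le_sum hstep
      rw [← Finset.mul_sum, ← hcardU, ← hsU] at h5
      have h6 := h5.trans h4
      rw [div_mul_eq_mul_div, le_div_iff₀ hl]
      linarith
    have hi : Integrable ((E m).indicator (fun _ => (1:ℝ))) μ :=
      (integrable_const 1).indicator (hEm m)
    have h7 := integral_mono (integrable_sum_smul μ (F N) _ hi)
      ((integrable_sum_smul μ F' r hri).const_mul (κ * (2 / lam))) pt
    rw [integral_const_mul, integral_sum_smul μ _ _ hi, integral_sum_smul μ _ _ hri,
      integral_indicator_const _ (hEm m), smul_eq_mul, mul_one] at h7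
    have hr00 : 0 ≤ ∫ x, r x ∂μ := integral_nonneg hr0
    have h8 : κ * (2 / lam) * (F'.card * ∫ x, r x ∂μ) ≤
        κ * (2 / lam) * ((2 * (F N).card) * ∫ x, r x ∂μ) := by gcongr
    have h9 := h7.trans h8
    have h10 : (F N).card * μ.real (E m) ≤ (F N).card * (κ * (2 / lam) * 2 * ∫ x, r x ∂μ) := by
      linarith
    exact le_of_mul_le_mul_left h10 hNpos
  rw [hEU]
  have ht : Tendsto (fun m => μ.real (E m)) atTop (𝓝 (μ.real (⋃ m, E m))) :=
    (ENNReal.tendsto_toReal (measure_ne_top _ _)).comp (tendsto_measure_iUnion_atTop hmono)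
  exact le_of_tendsto' ht main

lemma av_const {A : Finset G} (hA : A.Nonempty) (c : ℝ) (x : X) : av A (fun _ : X => c) x = c := by
  have : (0:ℝ) < A.card := by exact_mod_cast hA.card_pos
  simp [av]; field_simp

lemma av_mono (A : Finset G) (f h : X → ℝ) (hfh : ∀ x, f x ≤ h x) (x : X) : av A f x ≤ av A h x := by
  unfold av
  gcongr
  exact hfh _

lemma abs_av_le (A : Finset G) (f : X → ℝ) (x : X) : |av A f x| ≤ av A (fun y => |f y|) x := by
  unfold av
  rw [abs_div, Nat.abs_cast]
  gcongr
  exact Finset.abs_sum_le_sum_abs _ _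

/-- Pointwise ergodic theorem for bounded functions. -/
lemma ergodic_thm [Countable G] [MeasurableConstSMul G X] (μ : Measure X)
    [IsProbabilityMeasure μ] [SMulInvariantMeasure G X μ] (herg : IsErgodicGAction G μ)
    {F : ℕ → Finset G} (hF : IsFolnerSeq F) (hT : IsTemperedSeq F)
    (hne : ∀ᶠ n in atTop, (F n).Nonempty)
    (f : X → ℝ) (hf : Measurable f) (M : ℝ) (hM : ∀ x, |f x| ≤ M) :
    ∀ᵐ x ∂μ, Tendsto (fun n => av (F n) f x) atTop (𝓝 (∫ y, f y ∂μ)) := by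
  set c := ∫ y, f y ∂μ with hc
  have hM' : ∀ x, |f x| ≤ |M| := fun x => (hM x).trans (le_abs_self M)
  have hcM : |c| ≤ |M| := by
    have := norm_integral_le_of_norm_le_const (μ := μ) (f := f) (C := |M|) (Eventually.of_forall hM')
    simpa using this
  suffices H : ∀ j : ℕ, ∀ᵐ x ∂μ, ∀ᶠ n in atTop, |av (F n) f x - c| ≤ 1 / ((j:ℝ) + 1) by
    filter_upwards [ae_all_iff.2 H] with x hx
    rw [Metric.tendsto_nhds]
    intro ε hε
    obtain ⟨j, hj⟩ := exists_nat_one_div_lt hε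
    filter_upwards [hx j] with n hn
    rw [Real.dist_eq]
    exact hn.trans_lt hj
  intro j
  set ε : ℝ := 1 / ((j:ℝ) + 1) with hε
  have hε0 : 0 < ε := by positivity
  obtain ⟨κ, hκ, hmax⟩ := maximal μ hF hT hne (2 * |M| + 1) (ε / 2) (by positivity) (by positivity)
  rw [ae_iff]
  refine le_antisymm ?_ zero_le
  refine ENNReal.le_of_forall_pos_le_add fun e he _ => ?_
  rw [zero_add]
  have he' : (0:ℝ) < e := he
  obtain ⟨u, hum, hub, hui, hut⟩ := mean_approx μ herg hF f hf |M| hM' (e / κ) (by positivity)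
  have h1 := hmax (fun x => |u x - c|) (by fun_prop) (fun x => abs_nonneg _) (fun x => by
    have := abs_sub (u x) c
    have := hub x
    linarith)
  have h2 : μ.real {x | ∃ n, ε / 2 < av (F n) (fun x => |u x - c|) x} ≤ e := by
    refine h1.trans ?_
    have : κ * ∫ x, |u x - c| ∂μ ≤ κ * (e / κ) := by gcongr
    rwa [mul_div_cancel₀ _ hκ.ne'] at this
  have h3 : μ {x | ∃ n, ε / 2 < av (F n) (fun x => |u x - c|) x} ≤ e := by
    rw [← ENNReal.ofReal_toReal (measure_ne_top μ _), ← ENNReal.ofReal_coe_nnreal]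
    exact ENNReal.ofReal_le_ofReal h2
  refine (measure_mono ?_).trans h3
  intro x hx
  simp only [Set.mem_ofPred_eq] at hx ⊢
  by_contra hcon
  push Not at hcon
  refine hx ?_
  filter_upwards [(hut x).eventually (Metric.ball_mem_nhds 0 (half_pos hε0)), hne] with n h4 h5
  rw [Real.dist_eq, sub_zero] at h4
  have e1 : av (F n) f x - c = av (F n) (fun y => f y - u y) x + av (F n) (fun y => u y - c) x := by
    rw [← av_add]
    have hp : (0:ℝ) < (F n).card := by exact_mod_cast h5.card_pos
    simp only [av, sub_add_sub_cancel, Finset.sum_sub_distrib, Finset.sum_const, nsmul_eq_mul]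
    field_simp
  rw [e1]
  refine (abs_add_le _ _).trans ?_
  have := (abs_av_le (F n) (fun y => u y - c) x).trans (hcon n)
  linarith

end Maximal

section Config
set_option linter.unusedSectionVars false

lemma holder_step {ι α : Type*} [Fintype α] (J : Finset ι) (w : ι → ℝ) (b : ι → α → ℝ)
    (hw : ∀ i ∈ J, 0 ≤ w i) (hb : ∀ i ∈ J, ∀ a, 0 ≤ b i a) (hW : 1 ≤ ∑ i ∈ J, w i) :
    ∑ a, ∏ i ∈ J, b i a ^ w i ≤ ∏ i ∈ J, (∑ a, b i a) ^ w i := by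
  set B : ι → ℝ := fun i => ∑ a, b i a with hB
  have hB0 : ∀ i ∈ J, 0 ≤ B i := fun i hi => Finset.sum_nonneg fun a _ => hb i hi a
  by_cases hz : ∃ i ∈ J, B i = 0 ∧ w i ≠ 0
  · obtain ⟨i, hi, hBi, hwi⟩ := hz
    have hbi : ∀ a, b i a = 0 := fun a =>
      (Finset.sum_eq_zero_iff_of_nonneg (fun a _ => hb i hi a)).1 hBi a (Finset.mem_univ a)
    have : ∀ a, ∏ j ∈ J, b j a ^ w j = 0 := fun a =>
      Finset.prod_eq_zero hi (by rw [hbi a, Real.zero_rpow hwi])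
    rw [Finset.sum_eq_zero fun a _ => this a]
    exact Finset.prod_nonneg fun j hj => Real.rpow_nonneg (hB0 j hj) _
  push Not at hz
  set W := ∑ i ∈ J, w i with hWd
  have hW0 : 0 < W := by linarith
  have hc0 : ∀ i ∈ J, ∀ a, 0 ≤ b i a / B i := fun i hi a => div_nonneg (hb i hi a) (hB0 i hi)
  have hc1 : ∀ i ∈ J, ∀ a, b i a / B i ≤ 1 := fun i hi a => by
    refine div_le_one_of_le₀ ?_ (hB0 i hi)
    exact Finset.single_le_sum (f := fun a => b i a) (fun a _ => hb i hi a) (Finset.mem_univ a)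
  have e1 : ∀ a, ∏ i ∈ J, b i a ^ w i = (∏ i ∈ J, (b i a / B i) ^ w i) * ∏ i ∈ J, B i ^ w i := by
    intro a
    rw [← Finset.prod_mul_distrib]
    refine Finset.prod_congr rfl fun i hi => ?_
    by_cases hBi : B i = 0
    · rw [hz i hi hBi]; simp
    · rw [← Real.mul_rpow (hc0 i hi a) (hB0 i hi), div_mul_cancel₀ _ hBi]
  have hPB : 0 ≤ ∏ i ∈ J, B i ^ w i :=
    Finset.prod_nonneg fun j hj => Real.rpow_nonneg (hB0 j hj) _
  have e2 : ∀ a, ∏ i ∈ J, (b i a / B i) ^ w i ≤ ∑ i ∈ J, w i / W * (b i a / B i) := by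
    intro a
    have h1 : ∏ i ∈ J, (b i a / B i) ^ w i ≤ ∏ i ∈ J, (b i a / B i) ^ (w i / W) := by
      refine Finset.prod_le_prod (fun i hi => Real.rpow_nonneg (hc0 i hi a) _) fun i hi => ?_
      exact Real.rpow_le_rpow_of_exponent_ge' (hc0 i hi a) (hc1 i hi a)
        (div_nonneg (hw i hi) hW0.le) (div_le_self (hw i hi) hW)
    refine h1.trans (Real.geom_mean_le_arith_mean_weighted J _ _
      (fun i hi => div_nonneg (hw i hi) hW0.le) ?_ fun i hi => hc0 i hi a)
    rw [← Finset.sum_div, div_self hW0.ne']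
  rw [Finset.sum_congr rfl fun a _ => e1 a, ← Finset.sum_mul]
  refine mul_le_of_le_one_left hPB ?_
  refine (Finset.sum_le_sum fun a _ => e2 a).trans ?_
  rw [Finset.sum_comm]
  calc ∑ i ∈ J, ∑ a, w i / W * (b i a / B i) ≤ ∑ i ∈ J, w i / W := by
        refine Finset.sum_le_sum fun i hi => ?_
        rw [← Finset.mul_sum, ← Finset.sum_div]
        exact mul_le_of_le_one_right (div_nonneg (hw i hi) hW0.le)
          (div_le_one_of_le₀ le_rfl (hB0 i hi))
    _ = 1 := by rw [← Finset.sum_div, div_self hW0.ne']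

variable {α : Type*} [Fintype α] [DecidableEq G]

/-- Extension of a configuration on `S` by a base configuration. -/
def extc (u0 : G → α) (S : Finset G) (v : S → α) : G → α :=
  fun g => if h : g ∈ S then v ⟨g, h⟩ else u0 g

open Classical in
/-- All configurations which agree with the base configuration off `S`. -/
noncomputable def cfg (u0 : G → α) (S : Finset G) : Finset (G → α) :=
  Finset.univ.image (extc u0 S)

lemma mem_cfg {u0 : G → α} {S : Finset G} {u : G → α} :
    u ∈ cfg u0 S ↔ ∀ g ∉ S, u g = u0 g := by
  classical
  simp only [cfg, Finset.mem_image, Finset.mem_univ, true_and]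
  constructor
  · rintro ⟨v, rfl⟩ g hg
    simp [extc, hg]
  · intro h
    refine ⟨fun g => u g, ?_⟩
    ext g
    by_cases hg : g ∈ S
    · simp [extc, hg]
    · simp [extc, hg, h g hg]

lemma extc_injective (u0 : G → α) (S : Finset G) : Function.Injective (extc u0 S) := by
  intro v w h
  ext ⟨g, hg⟩
  have := congrFun h g
  simpa [extc, hg] using this

lemma sum_cfg_eq (u0 : G → α) (S : Finset G) (f : (G → α) → ℝ) :
    ∑ u ∈ cfg u0 S, f u = ∑ v : S → α, f (extc u0 S v) := by
  classical
  rw [cfg, Finset.sum_image (fun a _ b _ h => extc_injective u0 S h)]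

lemma sum_cfg_empty (u0 : G → α) (f : (G → α) → ℝ) : ∑ u ∈ cfg u0 ∅, f u = f u0 := by
  have : cfg u0 (∅ : Finset G) = {u0} := by
    ext u
    rw [mem_cfg, Finset.mem_singleton]
    simp [funext_iff]
  rw [this, Finset.sum_singleton]

lemma sum_cfg_insert (u0 : G → α) (S : Finset G) (g : G) (hg : g ∉ S) (f : (G → α) → ℝ) :
    ∑ u ∈ cfg u0 (insert g S), f u = ∑ u ∈ cfg u0 S, ∑ a, f (Function.update u g a) := by
  rw [← Finset.sum_product']
  refine (Finset.sum_bij' (fun z _ => Function.update z.1 g z.2)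
    (fun u _ => (Function.update u g (u0 g), u g)) ?_ ?_ ?_ ?_ ?_).symm
  · rintro ⟨u, a⟩ h
    have h1 := mem_cfg.1 (Finset.mem_product.1 h).1
    refine mem_cfg.2 fun k hk => ?_
    simp only [Finset.mem_insert, not_or] at hk
    simp only [Function.update_of_ne hk.1]
    exact h1 k hk.2
  · intro u h
    refine Finset.mem_product.2 ⟨mem_cfg.2 fun k hk => ?_, Finset.mem_univ _⟩
    by_cases hkg : k = g
    · subst hkg; simp
    · simp only [Function.update_of_ne hkg]
      exact mem_cfg.1 h k (by simp [hkg, hk])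
  · rintro ⟨u, a⟩ h
    have h1 := mem_cfg.1 (Finset.mem_product.1 h).1
    simp [← h1 g hg]
  · intro u h
    simp
  · rintro ⟨u, a⟩ h
    rfl

/-- Consistent families of weights. -/
structure Cons (q : Finset G → (G → α) → ℝ) : Prop where
  nonneg : ∀ S u, 0 ≤ q S u
  loc : ∀ S u v, (∀ g ∈ S, u g = v g) → q S u = q S v
  sum : ∀ S u g, g ∉ S → ∑ a, q (insert g S) (Function.update u g a) = q S u
  one : ∀ u, q ∅ u = 1

lemma Cons.total {q : Finset G → (G → α) → ℝ} (hq : Cons q) (u0 : G → α) (S : Finset G) :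
    ∑ u ∈ cfg u0 S, q S u = 1 := by
  induction S using Finset.induction_on with
  | empty => rw [sum_cfg_empty, hq.one]
  | insert g S hg ih =>
    rw [sum_cfg_insert _ _ _ hg, ← ih]
    exact Finset.sum_congr rfl fun u _ => hq.sum S u g hg

lemma Cons.anti {q : Finset G → (G → α) → ℝ} (hq : Cons q) {S T : Finset G} (h : S ⊆ T)
    (u : G → α) : q T u ≤ q S u := by
  have key : ∀ R : Finset G, q (S ∪ R) u ≤ q S u := by
    intro R
    induction R using Finset.induction_on with
    | empty => simp
    | insert g R hg ih =>
      rw [Finset.union_insert]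
      by_cases hgs : g ∈ S ∪ R
      · rwa [Finset.insert_eq_of_mem hgs]
      · refine le_trans ?_ ih
        rw [← hq.sum (S ∪ R) u g hgs]
        have := Finset.single_le_sum (f := fun a => q (insert g (S ∪ R)) (Function.update u g a))
          (fun a _ => hq.nonneg _ _) (Finset.mem_univ (u g))
        simpa using this
  have := key T
  rwa [Finset.union_eq_right.2 h] at this

lemma Cons.le_one {q : Finset G → (G → α) → ℝ} (hq : Cons q) (S : Finset G) (u : G → α) :
    q S u ≤ 1 := by
  rw [← hq.one u]; exact hq.anti (Finset.empty_subset S) u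

lemma finner {ι : Type*} (J : Finset ι) (w : ι → ℝ) (hw : ∀ i ∈ J, 0 ≤ w i)
    (q : ι → Finset G → (G → α) → ℝ) (hq : ∀ i ∈ J, Cons (q i)) (A : ι → Finset G)
    (u0 : G → α) (S : Finset G)
    (hcov : ∀ g ∈ S, 1 ≤ ∑ i ∈ J.filter (fun i => g ∈ A i), w i) :
    ∑ u ∈ cfg u0 S, ∏ i ∈ J, q i (A i ∩ S) u ^ w i ≤ 1 := by
  induction S using Finset.induction_on with
  | empty =>
    rw [sum_cfg_empty]
    refine le_of_eq (Finset.prod_eq_one fun i hi => ?_)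
    rw [Finset.inter_empty, (hq i hi).one, Real.one_rpow]
  | insert g S hg ih =>
    rw [sum_cfg_insert _ _ _ hg]
    refine le_trans (Finset.sum_le_sum fun u _ => ?_)
      (ih fun g' hg' => hcov g' (Finset.mem_insert_of_mem hg'))
    have hsplit : ∀ a, ∏ i ∈ J, q i (A i ∩ insert g S) (Function.update u g a) ^ w i =
        (∏ i ∈ J.filter (fun i => g ∈ A i), q i (insert g (A i ∩ S)) (Function.update u g a) ^ w i) *
        ∏ i ∈ J.filter (fun i => ¬ g ∈ A i), q i (A i ∩ S) u ^ w i := by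
      intro a
      rw [← Finset.prod_filter_mul_prod_filter_not J (fun i => g ∈ A i)]
      congr 1
      · refine Finset.prod_congr rfl fun i hi => ?_
        rw [Finset.inter_insert_of_mem (Finset.mem_filter.1 hi).2]
      · refine Finset.prod_congr rfl fun i hi => ?_
        obtain ⟨h1, h2⟩ := Finset.mem_filter.1 hi
        rw [Finset.inter_insert_of_notMem h2]
        rw [(hq i h1).loc (A i ∩ S) (Function.update u g a) u]
        intro k hk
        refine Function.update_of_ne ?_ _ _
        rintro rfl
        exact h2 (Finset.mem_inter.1 hk).1
    rw [Finset.sum_congr rfl fun a _ => hsplit a, ← Finset.sum_mul,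
      ← Finset.prod_filter_mul_prod_filter_not J (fun i => g ∈ A i)]
    refine mul_le_mul_of_nonneg_right ?_ (Finset.prod_nonneg fun i hi =>
      Real.rpow_nonneg ((hq i (Finset.mem_filter.1 hi).1).nonneg _ _) _)
    refine (holder_step _ w _ (fun i hi => hw i (Finset.mem_filter.1 hi).1)
      (fun i hi a => (hq i (Finset.mem_filter.1 hi).1).nonneg _ _)
      (hcov g (Finset.mem_insert_self _ _))).trans (le_of_eq ?_)
    refine Finset.prod_congr rfl fun i hi => ?_
    rw [(hq i (Finset.mem_filter.1 hi).1).sum]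
    exact fun h => hg (Finset.mem_inter.1 h).2

lemma sum_cfg_prod (u0 : G → α) (S : Finset G) (wt : α → ℝ) :
    ∑ u ∈ cfg u0 S, ∏ g ∈ S, wt (u g) = (∑ a, wt a) ^ S.card := by
  induction S using Finset.induction_on with
  | empty => rw [sum_cfg_empty]; simp
  | insert g S hg ih =>
    rw [sum_cfg_insert _ _ _ hg, Finset.card_insert_of_notMem hg, pow_succ, ← ih, Finset.sum_mul]
    refine Finset.sum_congr rfl fun u _ => ?_
    rw [Finset.mul_sum]
    refine Finset.sum_congr rfl fun a _ => ?_
    rw [Finset.prod_insert hg, mul_comm]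
    simp only [Function.update_self]
    congr 1
    refine Finset.prod_congr rfl fun k hk => ?_
    rw [Function.update_of_ne]
    rintro rfl; exact hg hk

end Config

section Names
set_option linter.unusedSectionVars false
variable [Group G] [MulAction G X] [MeasurableSpace X] {k : ℕ}

/-- The name of a point. -/
def nam (p : X → Fin k) (x : X) : G → Fin k := fun g => p (g • x)

/-- The cylinder determined by a configuration. -/
def cyl (p : X → Fin k) (S : Finset G) (u : G → Fin k) : Set X := {y | ∀ g ∈ S, p (g • y) = u g}

/-- Measure of a cylinder. -/
noncomputable def mm (μ : Measure X) (p : X → Fin k) (S : Finset G) (u : G → Fin k) : ℝ :=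
  μ.real (cyl p S u)

/-- Mixture of the measure of a cylinder and the uniform weight. -/
noncomputable def qq (μ : Measure X) (p : X → Fin k) (S : Finset G) (u : G → Fin k) : ℝ :=
  (mm μ p S u + ((k : ℝ)⁻¹) ^ S.card) / 2

lemma nam_mem_cyl {p : X → Fin k} {S : Finset G} {u : G → Fin k} {x : X} :
    x ∈ cyl p S u ↔ ∀ g ∈ S, nam p x g = u g := Iff.rfl

variable [MeasurableConstSMul G X]

lemma cyl_meas {p : X → Fin k} (hp : Measurable p) (S : Finset G) (u : G → Fin k) :
    MeasurableSet (cyl p S u) := by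
  have : cyl p S u = ⋂ g ∈ S, (fun y => p (g • y)) ⁻¹' {u g} := by
    ext y; simp [cyl]
  rw [this]
  exact Finset.measurableSet_biInter _ fun g _ =>
    (hp.comp (measurable_const_smul g)) (measurableSet_singleton _)

variable [DecidableEq G] (μ : Measure X) [IsProbabilityMeasure μ]

lemma mm_cons {p : X → Fin k} (hp : Measurable p) : Cons (mm (G := G) μ p) where
  nonneg S u := measureReal_nonneg
  loc S u v h := by
    unfold mm
    congr 1
    ext y
    simp only [cyl, Set.mem_ofPred_eq]
    exact forall₂_congr fun g hg => by rw [h g hg]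
  sum S u g hg := by
    unfold mm
    rw [← measureReal_biUnion_finset]
    · congr 1
      ext y
      simp only [cyl, Set.mem_iUnion, Set.mem_ofPred_eq, Finset.mem_univ, exists_true_left]
      constructor
      · rintro ⟨a, h⟩ k hk
        rw [h k (Finset.mem_insert_of_mem hk), Function.update_of_ne]
        rintro rfl; exact hg hk
      · intro h
        refine ⟨p (g • y), fun k hk => ?_⟩
        by_cases hkg : k = g
        · subst hkg; simp
        · rw [Function.update_of_ne hkg]
          exact h k (Finset.mem_of_mem_insert_of_ne hk hkg)
    · intro a _ b _ hab
      refine Set.disjoint_left.2 fun y h1 h2 => hab ?_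
      have e1 := h1 g (Finset.mem_insert_self _ _)
      have e2 := h2 g (Finset.mem_insert_self _ _)
      rw [Function.update_self] at e1 e2
      rw [← e1, ← e2]
    · exact fun a _ => cyl_meas hp _ _
  one u := by
    have : cyl p (∅ : Finset G) u = Set.univ := by ext; simp [cyl]
    rw [mm, this, probReal_univ]

lemma kpos {X : Type*} [MeasurableSpace X] (μ : Measure X) [IsProbabilityMeasure μ] {k : ℕ}
    (p : X → Fin k) : 0 < k := by
  have : Nonempty X := by
    by_contra h
    rw [not_nonempty_iff] at h
    exact (IsProbabilityMeasure.ne_zero μ) (Measure.eq_zero_of_isEmpty μ)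
  obtain ⟨x⟩ := this
  exact Fin.pos (p x)

lemma qq_cons {p : X → Fin k} (hp : Measurable p) : Cons (qq (G := G) μ p) where
  nonneg S u := by
    have := (mm_cons (G := G) μ hp).nonneg S u
    unfold qq; positivity
  loc S u v h := by unfold qq; rw [(mm_cons μ hp).loc S u v h]
  sum S u g hg := by
    have hk : (0:ℝ) < k := by exact_mod_cast kpos μ p
    unfold qq
    rw [← Finset.sum_div, Finset.sum_add_distrib, (mm_cons μ hp).sum S u g hg,
      Finset.card_insert_of_notMem hg]
    simp only [Finset.sum_const, Finset.card_univ, Fintype.card_fin, nsmul_eq_mul]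
    rw [pow_succ]
    field_simp
  one u := by
    unfold qq
    rw [(mm_cons μ hp).one]; norm_num

lemma mm_shift [SMulInvariantMeasure G X μ] {p : X → Fin k} (hp : Measurable p) (S : Finset G)
    (c : G) (x : X) : mm μ p (tl S c) (nam p x) = mm μ p S (nam p (c • x)) := by
  unfold mm
  have : cyl p (tl S c) (nam p x) = (fun y => c • y) ⁻¹' cyl p S (nam p (c • x)) := by
    ext y
    simp [cyl, nam, tl, smul_smul]
  rw [this, (measurePreserving_smul c μ).measureReal_preimage (cyl_meas hp _ _).nullMeasurableSet]

lemma qq_shift [SMulInvariantMeasure G X μ] {p : X → Fin k} (hp : Measurable p) (S : Finset G)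
    (c : G) (x : X) : qq μ p (tl S c) (nam p x) = qq μ p S (nam p (c • x)) := by
  unfold qq
  rw [mm_shift μ hp, card_tl]

lemma barron {p : X → Fin k} (hp : Measurable p) (S : Finset G) (V : (G → Fin k) → ℝ)
    (hV0 : ∀ u, 0 ≤ V u)
    (hV : ∀ u v, (∀ g ∈ S, u g = v g) → V u = V v) (u0 : G → Fin k) (B t : ℝ) (ht : 0 ≤ t)
    (hB : ∑ u ∈ cfg u0 S, V u ≤ B) :
    μ.real {x | mm μ p S (nam p x) < t * V (nam p x)} ≤ t * B := by
  classical
  have hsub : {x | mm μ p S (nam p x) < t * V (nam p x)} ⊆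
      ⋃ u ∈ (cfg u0 S).filter (fun u => mm μ p S u < t * V u), cyl p S u := by
    intro x hx
    simp only [Set.mem_ofPred_eq] at hx
    set u : G → Fin k := fun g => if g ∈ S then p (g • x) else u0 g with hu
    have hux : ∀ g ∈ S, nam p x g = u g := fun g hg => by simp [hu, hg, nam]
    rw [(mm_cons μ hp).loc S _ _ hux, hV _ _ hux] at hx
    refine Set.mem_biUnion (x := u) ?_ hux
    refine Finset.mem_coe.2 (Finset.mem_filter.2 ⟨mem_cfg.2 fun g hg => by simp [hu, hg], hx⟩)
  refine (measureReal_mono hsub (measure_ne_top _ _)).trans ?_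
  refine (measureReal_biUnion_finset_le _ _).trans ?_
  calc ∑ u ∈ (cfg u0 S).filter (fun u => mm μ p S u < t * V u), μ.real (cyl p S u)
      ≤ ∑ u ∈ (cfg u0 S).filter (fun u => mm μ p S u < t * V u), t * V u :=
        Finset.sum_le_sum fun u hu => (Finset.mem_filter.1 hu).2.le
    _ ≤ ∑ u ∈ cfg u0 S, t * V u := Finset.sum_le_sum_of_subset_of_nonneg (Finset.filter_subset _ _)
        fun u _ _ => mul_nonneg ht (hV0 u)
    _ ≤ t * B := by rw [← Finset.mul_sum]; exact mul_le_mul_of_nonneg_left hB ht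

lemma ae_mm_pos [Countable G] {p : X → Fin k} (hp : Measurable p) :
    ∀ᵐ x ∂μ, ∀ S : Finset G, 0 < mm μ p S (nam p x) := by
  rw [ae_all_iff]
  intro S
  have : Nonempty X := by
    by_contra h
    rw [not_nonempty_iff] at h
    exact (IsProbabilityMeasure.ne_zero μ) (Measure.eq_zero_of_isEmpty μ)
  obtain ⟨x0⟩ := this
  rw [ae_iff]
  have hsub : {x | ¬ 0 < mm μ p S (nam p x)} ⊆
      ⋃ u ∈ (cfg (nam p x0) S).filter (fun u => mm μ p S u = 0), cyl p S u := by
    intro x hx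
    simp only [Set.mem_ofPred_eq, not_lt] at hx
    have hx := le_antisymm hx ((mm_cons μ hp).nonneg _ _)
    set u : G → Fin k := fun g => if g ∈ S then p (g • x) else nam p x0 g with hu
    have hux : ∀ g ∈ S, nam p x g = u g := fun g hg => by simp [hu, hg, nam]
    rw [(mm_cons μ hp).loc S _ _ hux] at hx
    refine Set.mem_biUnion (x := u) ?_ hux
    refine Finset.mem_coe.2 (Finset.mem_filter.2 ⟨mem_cfg.2 fun g hg => by simp [hu, hg], hx⟩)
  refine measure_mono_null hsub ?_
  refine (measure_biUnion_null_iff (Finset.countable_toSet _)).2 ?_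
  intro u hu
  have := (Finset.mem_filter.1 hu).2
  unfold mm at this
  exact (measureReal_eq_zero_iff).1 this

lemma meas_of_loc {p : X → Fin k} (hp : Measurable p) (S : Finset G) (V : (G → Fin k) → ℝ)
    (hV : ∀ u v, (∀ g ∈ S, u g = v g) → V u = V v) (u0 : G → Fin k) :
    (fun x => V (nam p x)) =
      fun x => ∑ u ∈ cfg u0 S, (cyl p S u).indicator (fun _ => V u) x := by
  classical
  ext x
  set u : G → Fin k := fun g => if g ∈ S then p (g • x) else u0 g with hu
  have hux : ∀ g ∈ S, nam p x g = u g := fun g hg => by simp [hu, hg, nam]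
  rw [Finset.sum_eq_single u]
  · rw [Set.indicator_of_mem (show x ∈ cyl p S u from hux), hV _ _ hux]
  · intro v hv hvu
    refine Set.indicator_of_notMem (fun hx => hvu ?_) _
    ext g
    by_cases hg : g ∈ S
    · rw [← hx g hg, ← hux g hg]; rfl
    · rw [mem_cfg.1 hv g hg]; simp [hu, hg]
  · intro h
    exact absurd (mem_cfg.2 fun g hg => by simp [hu, hg]) h

lemma measurable_loc {p : X → Fin k} (hp : Measurable p) (S : Finset G) (V : (G → Fin k) → ℝ)
    (hV : ∀ u v, (∀ g ∈ S, u g = v g) → V u = V v) (u0 : G → Fin k) :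
    Measurable (fun x => V (nam p x)) := by
  rw [meas_of_loc hp S V hV u0]
  exact Finset.measurable_fun_sum _ fun u _ => measurable_const.indicator (cyl_meas hp _ _)

lemma integral_loc {p : X → Fin k} (hp : Measurable p) (S : Finset G) (V : (G → Fin k) → ℝ)
    (hV : ∀ u v, (∀ g ∈ S, u g = v g) → V u = V v) (u0 : G → Fin k) :
    ∫ x, V (nam p x) ∂μ = ∑ u ∈ cfg u0 S, mm μ p S u * V u := by
  rw [meas_of_loc hp S V hV u0, integral_finsetSum]
  · refine Finset.sum_congr rfl fun u _ => ?_
    rw [integral_indicator_const _ (cyl_meas hp _ _), smul_eq_mul]; rfl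
  · exact fun u _ => (integrable_const _).indicator (cyl_meas hp _ _)

/-- The information function of the mixture. -/
noncomputable def phi (p : X → Fin k) (S : Finset G) (x : X) : ℝ := -Real.log (qq μ p S (nam p x))

/-- The information function. -/
noncomputable def info (p : X → Fin k) (S : Finset G) (x : X) : ℝ := -Real.log (mm μ p S (nam p x))

lemma qq_pos {p : X → Fin k} (hp : Measurable p) (S : Finset G) (u : G → Fin k) :
    0 < qq μ p S u := by
  have hk : (0:ℝ) < k := by exact_mod_cast kpos μ p
  have := (mm_cons (G := G) μ hp).nonneg S u
  unfold qq; positivity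

lemma phi_nonneg {p : X → Fin k} (hp : Measurable p) (S : Finset G) (x : X) : 0 ≤ phi μ p S x := by
  unfold phi
  have := Real.log_nonpos ((qq_cons μ hp).nonneg S (nam p x)) ((qq_cons μ hp).le_one S _)
  linarith

lemma log_k_nonneg {X : Type*} [MeasurableSpace X] (μ : Measure X) [IsProbabilityMeasure μ] {k : ℕ}
    (p : X → Fin k) : 0 ≤ Real.log k :=
  Real.log_nonneg (by exact_mod_cast kpos μ p)

lemma log_two_le : Real.log 2 ≤ 1 := by
  have := Real.log_two_lt_d9; linarith

lemma phi_le {p : X → Fin k} (hp : Measurable p) (S : Finset G) (hS : S.Nonempty) (x : X) :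
    phi μ p S x ≤ (Real.log k + 1) * S.card := by
  have hk : (0:ℝ) < k := by exact_mod_cast kpos μ p
  have h1 : ((k : ℝ)⁻¹) ^ S.card / 2 ≤ qq μ p S (nam p x) := by
    have := (mm_cons (G := G) μ hp).nonneg S (nam p x)
    unfold qq; linarith
  have h2 := Real.log_le_log (by positivity) h1
  rw [Real.log_div (by positivity) (by norm_num), Real.log_pow, Real.log_inv] at h2
  have h3 : (1:ℝ) ≤ S.card := by exact_mod_cast hS.card_pos
  have := log_two_le
  unfold phi
  linarith

lemma phi_le_info {p : X → Fin k} (hp : Measurable p) (S : Finset G) (x : X)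
    (hx : 0 < mm μ p S (nam p x)) : phi μ p S x ≤ info μ p S x + Real.log 2 := by
  have hk : (0:ℝ) < k := by exact_mod_cast kpos μ p
  have h1 : mm μ p S (nam p x) / 2 ≤ qq μ p S (nam p x) := by
    have : 0 < ((k : ℝ)⁻¹) ^ S.card := by positivity
    unfold qq; linarith
  have h2 := Real.log_le_log (by positivity) h1
  rw [Real.log_div (by positivity) (by norm_num)] at h2
  unfold phi info
  linarith

lemma phi_loc {p : X → Fin k} (hp : Measurable p) (S : Finset G) (u v : G → Fin k)
    (h : ∀ g ∈ S, u g = v g) : -Real.log (qq μ p S u) = -Real.log (qq μ p S v) := by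
  rw [(qq_cons μ hp).loc S u v h]

lemma measurable_phi {p : X → Fin k} (hp : Measurable p) (S : Finset G) :
    Measurable (phi μ p S) := by
  have : Nonempty (Fin k) := ⟨⟨0, kpos μ p⟩⟩
  exact measurable_loc hp S (fun u => -Real.log (qq μ p S u)) (phi_loc μ hp S)
    (fun _ => Classical.arbitrary _)

/-- Entropy of the cylinder partition. -/
noncomputable def HH (p : X → Fin k) (u0 : G → Fin k) (S : Finset G) : ℝ :=
  ∑ u ∈ cfg u0 S, Real.negMulLog (mm μ p S u)

lemma HH_le {p : X → Fin k} (hp : Measurable p) (u0 : G → Fin k) (S : Finset G) :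
    HH μ p u0 S ≤ ∫ x, phi μ p S x ∂μ := by
  have e : ∫ x, phi μ p S x ∂μ = ∑ u ∈ cfg u0 S, mm μ p S u * (-Real.log (qq μ p S u)) :=
    integral_loc μ hp S (fun u => -Real.log (qq μ p S u)) (phi_loc μ hp S) u0
  rw [e, HH, ← sub_nonneg, ← Finset.sum_sub_distrib]
  have h1 : ∑ u ∈ cfg u0 S, (mm μ p S u - qq μ p S u) = 0 := by
    rw [Finset.sum_sub_distrib, (mm_cons μ hp).total, (qq_cons μ hp).total, sub_self]
  rw [← h1]
  refine Finset.sum_le_sum fun u _ => ?_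
  have hq := qq_pos μ hp S u
  rcases ((mm_cons (G := G) μ hp).nonneg S u).eq_or_lt with h | h
  · rw [← h]; simp; exact hq.le
  · have := Real.log_le_sub_one_of_pos (div_pos hq h)
    rw [Real.log_div hq.ne' h.ne'] at this
    rw [Real.negMulLog]
    have h2 := mul_le_mul_of_nonneg_left this h.le
    have h3 : mm μ p S u * (qq μ p S u / mm μ p S u - 1) = qq μ p S u - mm μ p S u := by
      field_simp
    rw [h3] at h2
    linarith

lemma le_HH {p : X → Fin k} (hp : Measurable p) (u0 : G → Fin k) (S : Finset G) :
    ∫ x, phi μ p S x ∂μ ≤ HH μ p u0 S + Real.log 2 := by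
  have hk : (0:ℝ) < k := by exact_mod_cast kpos μ p
  have e : ∫ x, phi μ p S x ∂μ = ∑ u ∈ cfg u0 S, mm μ p S u * (-Real.log (qq μ p S u)) :=
    integral_loc μ hp S (fun u => -Real.log (qq μ p S u)) (phi_loc μ hp S) u0
  have h2 : Real.log 2 = ∑ u ∈ cfg u0 S, mm μ p S u * Real.log 2 := by
    rw [← Finset.sum_mul, (mm_cons μ hp).total, one_mul]
  rw [e, HH, h2, ← Finset.sum_add_distrib]
  refine Finset.sum_le_sum fun u _ => ?_
  rcases ((mm_cons (G := G) μ hp).nonneg S u).eq_or_lt with h | h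
  · rw [← h]; simp
  · have h1 : mm μ p S u / 2 ≤ qq μ p S u := by
      have : 0 < ((k : ℝ)⁻¹) ^ S.card := by positivity
      unfold qq; linarith
    have h3 := Real.log_le_log (by positivity) h1
    rw [Real.log_div (by positivity) (by norm_num)] at h3
    rw [Real.negMulLog]
    nlinarith

end Names

section Growth

lemma growth_log {F : ℕ → Finset G} (hG : GrowthCond F) (a : ℝ) :
    ∀ᶠ n : ℕ in atTop, a * Real.log n ≤ (F n).card := by
  filter_upwards [hG.eventually_ge_atTop a, eventually_ge_atTop 2] with n h1 h2
  have h3 : 0 < Real.log n := Real.log_pos (by exact_mod_cast h2)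
  exact (le_div_iff₀ h3).1 h1

lemma growth_card {F : ℕ → Finset G} (hG : GrowthCond F) :
    Tendsto (fun n => ((F n).card : ℝ)) atTop atTop := by
  refine tendsto_atTop_mono' _ ?_ (Real.tendsto_log_atTop.comp tendsto_natCast_atTop_atTop)
  filter_upwards [growth_log hG 1] with n hn
  simpa using hn

lemma growth_ne {F : ℕ → Finset G} (hG : GrowthCond F) : ∀ᶠ n in atTop, (F n).Nonempty := by
  filter_upwards [(growth_card hG).eventually_gt_atTop 0] with n hn
  exact Finset.card_pos.1 (by exact_mod_cast hn)

lemma growth_summable {F : ℕ → Finset G} (hG : GrowthCond F) (γ : ℝ) (hγ : 0 < γ) :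
    Summable (fun n => Real.exp (-γ * (F n).card)) := by
  refine Summable.of_norm_bounded_eventually_nat (g := fun n : ℕ => 1 / (n:ℝ) ^ 2)
    (Real.summable_one_div_nat_pow.2 one_lt_two) ?_
  filter_upwards [growth_log hG (2 / γ), eventually_ge_atTop 1] with n h1 h2
  have hn : (0:ℝ) < n := by exact_mod_cast h2
  rw [Real.norm_eq_abs, Real.abs_exp]
  have h3 : 2 * Real.log n ≤ γ * (F n).card := by
    have := mul_le_mul_of_nonneg_left h1 hγ.le
    rwa [← mul_assoc, mul_div_cancel₀ _ hγ.ne'] at this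
  calc Real.exp (-γ * (F n).card) ≤ Real.exp (-(2 * Real.log n)) := by
        apply Real.exp_le_exp.2; linarith
    _ = 1 / (n:ℝ) ^ 2 := by
        rw [Real.exp_neg, one_div]
        congr 1
        rw [mul_comm, Real.exp_mul, Real.exp_log hn]; norm_cast

lemma growth_tail {F : ℕ → Finset G} (hG : GrowthCond F) (s : ℝ) (hs : 0 < s) :
    ∀ᶠ n0 in atTop, ∀ M, ∑ n ∈ Finset.range M,
      (if n0 ≤ n then Real.exp (-s * (F n).card) else 0) ≤ s := by
  have h := growth_summable hG s hs
  have ht := tendsto_sum_nat_add (fun n => Real.exp (-s * (F n).card))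
  filter_upwards [ht.eventually_lt_const hs] with n0 hn0 M
  rw [← Finset.sum_filter]
  refine le_trans ?_ hn0.le
  have h2 : Summable (fun n => Real.exp (-s * (F (n + n0)).card)) :=
    (summable_nat_add_iff n0).2 h
  refine le_trans ?_ (h2.sum_le_tsum (Finset.range M) fun i _ => (Real.exp_pos _).le)
  calc ∑ n ∈ (Finset.range M).filter (fun n => n0 ≤ n), Real.exp (-s * (F n).card)
      ≤ ∑ n ∈ (Finset.range M).image (fun n => n + n0), Real.exp (-s * (F n).card) := by
        refine Finset.sum_le_sum_of_subset_of_nonneg ?_ fun i _ _ => (Real.exp_pos _).le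
        intro n hn
        simp only [Finset.mem_filter, Finset.mem_range, Finset.mem_image] at hn ⊢
        exact ⟨n - n0, by omega, by omega⟩
    _ = _ := by rw [Finset.sum_image]; intro a _ b _ h; simpa using h

lemma borel_cantelli_real [MeasurableSpace X] (μ : Measure X) [IsProbabilityMeasure μ]
    {F : ℕ → Finset G} (hG : GrowthCond F)
    (γ : ℝ) (hγ : 0 < γ) (B : ℕ → Set X) (hB : ∀ n, μ.real (B n) ≤ Real.exp (-γ * (F n).card)) :
    ∀ᵐ x ∂μ, ∀ᶠ n in atTop, x ∉ B n := by
  refine ae_eventually_notMem ?_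
  refine ne_top_of_le_ne_top ?_ (ENNReal.tsum_le_tsum (g := fun n =>
    ENNReal.ofReal (Real.exp (-γ * (F n).card))) fun n => ?_)
  · rw [← ENNReal.ofReal_tsum_of_nonneg (fun n => (Real.exp_pos _).le) (growth_summable hG γ hγ)]
    exact ENNReal.ofReal_ne_top
  · rw [← ENNReal.ofReal_toReal (measure_ne_top μ _)]
    exact ENNReal.ofReal_le_ofReal (hB n)

end Growth

section Code
set_option linter.unusedSectionVars false
variable [Group G] [MulAction G X] [MeasurableSpace X] {k : ℕ}
variable [MeasurableConstSMul G X] [DecidableEq G] (μ : Measure X) [IsProbabilityMeasure μ]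

/-- The tile attached to a label. -/
def tile (F : ℕ → Finset G) {M : ℕ} (o : Option (Fin M)) (c : G) : Finset G :=
  match o with
  | none => ∅
  | some n => tl (F n) c

/-- The weight of a label. -/
noncomputable def lwt (F : ℕ → Finset G) (n0 : ℕ) (s : ℝ) {M : ℕ} (o : Option (Fin M)) : ℝ :=
  match o with
  | none => 1
  | some n => if n0 ≤ n.1 then Real.exp (-s * (F n).card) else 0

lemma lwt_nonneg (F : ℕ → Finset G) (n0 : ℕ) (s : ℝ) {M : ℕ} (o : Option (Fin M)) :
    0 ≤ lwt F n0 s o := by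
  unfold lwt
  split
  · exact zero_le_one
  · split
    · exact (Real.exp_pos _).le
    · exact le_rfl

lemma lwt_sum (F : ℕ → Finset G) (n0 : ℕ) (s : ℝ) (M : ℕ)
    (h : ∑ n ∈ Finset.range M, (if n0 ≤ n then Real.exp (-s * (F n).card) else 0) ≤ s) :
    ∑ o : Option (Fin M), lwt F n0 s o ≤ 1 + s := by
  rw [Fintype.sum_option]
  have : ∑ n : Fin M, lwt F n0 s (some n) =
      ∑ n ∈ Finset.range M, (if n0 ≤ n then Real.exp (-s * (F n).card) else 0) := by
    rw [← Fin.sum_univ_eq_sum_range (fun n => if n0 ≤ n then Real.exp (-s * (F n).card) else 0)]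
    rfl
  rw [this]
  have : lwt F n0 s (none : Option (Fin M)) = 1 := rfl
  linarith

/-- Code weight attached to a labelling. -/
noncomputable def codeW (p : X → Fin k) (K S : Finset G) (t : G → Finset G) (u : G → Fin k) : ℝ :=
  (∏ c ∈ S, mm μ p (t c ∩ S) u) *
    ∏ c ∈ K⁻¹ * S, qq μ p ((tl K c \ S.biUnion t) ∩ S) u ^ ((K.card : ℝ)⁻¹)

lemma codeW_sum {p : X → Fin k} (hp : Measurable p) (K S : Finset G) (hK : K.Nonempty)
    (t : G → Finset G) (u0 : G → Fin k) : ∑ u ∈ cfg u0 S, codeW μ p K S t u ≤ 1 := by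
  have hKc : (0:ℝ) < K.card := by exact_mod_cast hK.card_pos
  have h := finner (ι := G ⊕ G) (S.disjSum (K⁻¹ * S)) (Sum.elim (fun _ => 1) fun _ => (K.card:ℝ)⁻¹)
    (by rintro (i | i) _
        · exact zero_le_one
        · simp)
    (Sum.elim (fun _ => mm μ p) fun _ => qq μ p)
    (by rintro (i | i) _
        · exact mm_cons μ hp
        · exact qq_cons μ hp)
    (Sum.elim t fun c => tl K c \ S.biUnion t) u0 S (by
      intro g hg
      by_cases hgT : g ∈ S.biUnion t
      · obtain ⟨c, hc, hgc⟩ := Finset.mem_biUnion.1 hgT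
        have := Finset.single_le_sum (s := (S.disjSum (K⁻¹ * S)).filter
          (fun i => g ∈ Sum.elim t (fun c => tl K c \ S.biUnion t) i))
          (f := Sum.elim (fun _ => (1:ℝ)) fun _ => (K.card:ℝ)⁻¹) (a := Sum.inl c)
          (by rintro (i | i) _
              · exact zero_le_one
              · simp)
          (Finset.mem_filter.2 ⟨by simpa using hc, by simpa using hgc⟩)
        simpa using this
      · have h1 : (K.image (fun a => (Sum.inr (a⁻¹ * g) : G ⊕ G))) ⊆ (S.disjSum (K⁻¹ * S)).filter
          (fun i => g ∈ Sum.elim t (fun c => tl K c \ S.biUnion t) i) := by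
          intro i hi
          obtain ⟨a, ha, rfl⟩ := Finset.mem_image.1 hi
          refine Finset.mem_filter.2 ⟨?_, ?_⟩
          · simp only [Finset.inr_mem_disjSum]
            exact Finset.mul_mem_mul (Finset.inv_mem_inv ha) hg
          · simp only [Sum.elim_inr, Finset.mem_sdiff]
            exact ⟨mem_tl.2 ⟨a, ha, by simp⟩, hgT⟩
        have h2 := Finset.sum_le_sum_of_subset_of_nonneg
          (f := Sum.elim (fun _ => (1:ℝ)) fun _ => (K.card:ℝ)⁻¹) h1
          (by rintro (i | i) _ _
              · exact zero_le_one
              · simp)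
        refine le_trans ?_ h2
        rw [Finset.sum_image (by intro a _ b _ h; simpa using h)]
        simp [hKc.ne'])
  simpa [codeW, Finset.prod_disjSum] using h

lemma codeW_nonneg {p : X → Fin k} (hp : Measurable p) (K S : Finset G)
    (t : G → Finset G) (u : G → Fin k) : 0 ≤ codeW μ p K S t u :=
  mul_nonneg (Finset.prod_nonneg fun _ _ => (mm_cons μ hp).nonneg _ _)
    (Finset.prod_nonneg fun _ _ => Real.rpow_nonneg ((qq_cons μ hp).nonneg _ _) _)

lemma codeW_loc {p : X → Fin k} (hp : Measurable p) (K S : Finset G)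
    (t : G → Finset G) (u v : G → Fin k) (h : ∀ g ∈ S, u g = v g) :
    codeW μ p K S t u = codeW μ p K S t v := by
  unfold codeW
  congr 1
  · refine Finset.prod_congr rfl fun c _ => (mm_cons μ hp).loc _ _ _ fun g hg => ?_
    exact h g (Finset.mem_inter.1 hg).2
  · refine Finset.prod_congr rfl fun c _ => ?_
    rw [(qq_cons μ hp).loc _ u v fun g hg => h g (Finset.mem_inter.1 hg).2]

lemma code_fin {p : X → Fin k} (hp : Measurable p) (F : ℕ → Finset G) (K S : Finset G)
    (hK : K.Nonempty) (s : ℝ) (hs : 0 < s) (n0 M : ℕ)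
    (h : ∑ n ∈ Finset.range M, (if n0 ≤ n then Real.exp (-s * (F n).card) else 0) ≤ s) :
    μ.real {x | mm μ p S (nam p x) < Real.exp (-(2 * s * S.card)) *
      ∑ σ ∈ cfg (fun _ => (none : Option (Fin M))) S, (∏ c ∈ S, lwt F n0 s (σ c)) *
        codeW μ p K S (fun c => tile F (σ c) c) (nam p x)} ≤ Real.exp (-s * S.card) := by
  have : Nonempty (Fin k) := ⟨⟨0, kpos μ p⟩⟩
  set u0 : G → Fin k := fun _ => Classical.arbitrary _
  have hb := barron μ hp S (fun u => ∑ σ ∈ cfg (fun _ => (none : Option (Fin M))) S,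
    (∏ c ∈ S, lwt F n0 s (σ c)) * codeW μ p K S (fun c => tile F (σ c) c) u)
    (fun u => Finset.sum_nonneg fun σ _ => mul_nonneg
      (Finset.prod_nonneg fun c _ => lwt_nonneg _ _ _ _) (codeW_nonneg μ hp _ _ _ _))
    (fun u v huv => Finset.sum_congr rfl fun σ _ => by rw [codeW_loc μ hp _ _ _ u v huv])
    u0 (Real.exp (s * S.card)) (Real.exp (-(2 * s * S.card))) (Real.exp_pos _).le (by
      rw [Finset.sum_comm]
      calc _ ≤ ∑ σ ∈ cfg (fun _ => (none : Option (Fin M))) S, ∏ c ∈ S, lwt F n0 s (σ c) := by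
            refine Finset.sum_le_sum fun σ _ => ?_
            rw [← Finset.mul_sum]
            exact mul_le_of_le_one_right (Finset.prod_nonneg fun c _ => lwt_nonneg _ _ _ _)
              (codeW_sum μ hp K S hK _ u0)
        _ = (∑ o : Option (Fin M), lwt F n0 s o) ^ S.card := sum_cfg_prod _ _ _
        _ ≤ (Real.exp s) ^ S.card := by
            refine pow_le_pow_left₀ (Finset.sum_nonneg fun o _ => lwt_nonneg _ _ _ _) ?_ _
            have := Real.add_one_le_exp s
            have := lwt_sum F n0 s M h
            linarith
        _ = Real.exp (s * S.card) := by rw [← Real.exp_nat_mul, mul_comm])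
  refine hb.trans (le_of_eq ?_)
  rw [← Real.exp_add]
  congr 1; ring

lemma code [Countable G] [SMulInvariantMeasure G X μ] {p : X → Fin k} (hp : Measurable p)
    {F : ℕ → Finset G} (hG : GrowthCond F) (K : Finset G)
    (hK : K.Nonempty) (s : ℝ) (hs : 0 < s) (n0 M : ℕ)
    (h : ∑ n ∈ Finset.range M, (if n0 ≤ n then Real.exp (-s * (F n).card) else 0) ≤ s) :
    ∀ᵐ x ∂μ, ∀ᶠ N in atTop, ∀ I ⊆ F N, ∀ nn : G → ℕ, (∀ c ∈ I, n0 ≤ nn c ∧ nn c < M) →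
      info μ p (F N) x ≤ 2 * s * (F N).card + ∑ c ∈ I, (s * (F (nn c)).card +
        info μ p (F (nn c)) (c • x)) + ∑ c ∈ (K⁻¹ * F N).filter
          (fun c => ¬ (tl K c ∩ F N ⊆ I.biUnion fun c => tl (F (nn c)) c)),
            (K.card : ℝ)⁻¹ * phi μ p K (c • x) := by
  have hKc : (0:ℝ) < K.card := by exact_mod_cast hK.card_pos
  filter_upwards [ae_mm_pos (G := G) μ hp, borel_cantelli_real μ hG s hs _
    (fun n => code_fin μ hp F K (F n) hK s hs n0 M h)] with x hx1 hx2
  filter_upwards [hx2] with N hN I hI nn hnn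
  simp only [Set.mem_ofPred_eq, not_lt] at hN
  set S := F N
  set σ : G → Option (Fin M) := fun c => if hc : c ∈ I then some ⟨nn c, (hnn c hc).2⟩ else none with hσ
  have hσc : σ ∈ cfg (fun _ => (none : Option (Fin M))) S := mem_cfg.2 fun g hg => by
    have : g ∉ I := fun h => hg (hI h)
    simp [hσ, this]
  have hT : S.biUnion (fun c => tile F (σ c) c) = I.biUnion fun c => tl (F (nn c)) c := by
    ext g
    simp only [Finset.mem_biUnion]
    constructor
    · rintro ⟨c, hc, hg⟩
      by_cases hcI : c ∈ I
      · refine ⟨c, hcI, ?_⟩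
        simpa [hσ, hcI, tile] using hg
      · simp [hσ, hcI, tile] at hg
    · rintro ⟨c, hc, hg⟩
      refine ⟨c, hI hc, ?_⟩
      simpa [hσ, hc, tile] using hg
  set T := I.biUnion fun c => tl (F (nn c)) c with hTd
  have h1 := Finset.single_le_sum (s := cfg (fun _ => (none : Option (Fin M))) S) (f := fun σ =>
    (∏ c ∈ S, lwt F n0 s (σ c)) * codeW μ p K S (fun c => tile F (σ c) c) (nam p x))
    (fun σ _ => mul_nonneg (Finset.prod_nonneg fun c _ => lwt_nonneg _ _ _ _)
      (codeW_nonneg μ hp _ _ _ _)) hσc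
  set E1 : G → ℝ := fun c => if c ∈ I then s * (F (nn c)).card + info μ p (F (nn c)) (c • x) else 0
  set E2 : G → ℝ := fun c => if ¬ (tl K c ∩ S ⊆ T) then (K.card : ℝ)⁻¹ * phi μ p K (c • x) else 0
  have a1 : ∏ c ∈ S, Real.exp (-E1 c) ≤
      ∏ c ∈ S, (lwt F n0 s (σ c) * mm μ p (tile F (σ c) c ∩ S) (nam p x)) := by
    refine Finset.prod_le_prod (fun c _ => (Real.exp_pos _).le) fun c hc => ?_
    by_cases hcI : c ∈ I
    · have e1 : lwt F n0 s (σ c) = Real.exp (-s * (F (nn c)).card) := by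
        simp [hσ, hcI, lwt, (hnn c hcI).1]
      have e2 : tile F (σ c) c = tl (F (nn c)) c := by simp [hσ, hcI, tile]
      have e3 : mm μ p (tl (F (nn c)) c) (nam p x) ≤ mm μ p (tl (F (nn c)) c ∩ S) (nam p x) :=
        (mm_cons μ hp).anti Finset.inter_subset_left _
      rw [mm_shift μ hp] at e3
      have e4 : 0 < mm μ p (F (nn c)) (nam p (c • x)) := by rw [← mm_shift μ hp]; exact hx1 _
      have e5 : Real.exp (-E1 c) = Real.exp (-s * (F (nn c)).card) * mm μ p (F (nn c)) (nam p (c • x)) := by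
        simp only [E1, hcI, if_true, info]
        rw [← Real.exp_log e4, ← Real.exp_add, Real.exp_log e4]
        congr 1; ring
      rw [e5, e1, e2]
      exact mul_le_mul_of_nonneg_left e3 (Real.exp_pos _).le
    · have e1 : lwt F n0 s (σ c) = 1 := by simp [hσ, hcI, lwt]
      have e2 : tile F (σ c) c = ∅ := by simp [hσ, hcI, tile]
      rw [e1, e2, Finset.empty_inter, (mm_cons μ hp).one]
      simp [E1, hcI]
  have a2 : ∏ c ∈ K⁻¹ * S, Real.exp (-E2 c) ≤
      ∏ c ∈ K⁻¹ * S, qq μ p ((tl K c \ T) ∩ S) (nam p x) ^ ((K.card : ℝ)⁻¹) := by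
    refine Finset.prod_le_prod (fun c _ => (Real.exp_pos _).le) fun c hc => ?_
    by_cases hcT : tl K c ∩ S ⊆ T
    · have : (tl K c \ T) ∩ S = ∅ := by
        ext g
        simp only [Finset.mem_inter, Finset.mem_sdiff, Finset.notMem_empty, iff_false]
        rintro ⟨⟨h1, h2⟩, h3⟩
        exact h2 (hcT (Finset.mem_inter.2 ⟨h1, h3⟩))
      rw [this, (qq_cons μ hp).one]
      simp [E2, hcT]
    · have e3 : qq μ p (tl K c) (nam p x) ≤ qq μ p ((tl K c \ T) ∩ S) (nam p x) :=
        (qq_cons μ hp).anti (Finset.inter_subset_left.trans Finset.sdiff_subset) _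
      rw [qq_shift μ hp] at e3
      have e4 := qq_pos (G := G) μ hp K (nam p (c • x))
      have e5 : Real.exp (-E2 c) = qq μ p K (nam p (c • x)) ^ ((K.card : ℝ)⁻¹) := by
        rw [Real.rpow_def_of_pos e4]
        simp only [E2, hcT, not_false_eq_true, if_true, phi]
        congr 1; ring
      rw [e5]
      exact Real.rpow_le_rpow e4.le e3 (by positivity)
  have a3 : Real.exp (-(∑ c ∈ S, E1 c)) * Real.exp (-(∑ c ∈ K⁻¹ * S, E2 c)) ≤
      (∏ c ∈ S, lwt F n0 s (σ c)) * codeW μ p K S (fun c => tile F (σ c) c) (nam p x) := by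
    rw [codeW, hT, ← mul_assoc, ← Finset.prod_mul_distrib, ← Finset.sum_neg_distrib,
      ← Finset.sum_neg_distrib, Real.exp_sum, Real.exp_sum]
    exact mul_le_mul a1 a2 (Finset.prod_nonneg fun c _ => (Real.exp_pos _).le)
      (Finset.prod_nonneg fun c _ => mul_nonneg (lwt_nonneg _ _ _ _) ((mm_cons μ hp).nonneg _ _))
  have a4 := (mul_le_mul_of_nonneg_left (a3.trans h1) (Real.exp_pos (-(2 * s * S.card))).le).trans hN
  rw [← Real.exp_add, ← Real.exp_add] at a4
  have a5 := Real.log_le_log (Real.exp_pos _) a4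
  rw [Real.log_exp] at a5
  have b1 : ∑ c ∈ S, E1 c = ∑ c ∈ I, (s * (F (nn c)).card + info μ p (F (nn c)) (c • x)) := by
    simp only [E1]
    rw [Finset.sum_ite_mem, Finset.inter_eq_right.2 hI]
  have b2 : ∑ c ∈ K⁻¹ * S, E2 c = ∑ c ∈ (K⁻¹ * S).filter (fun c => ¬ (tl K c ∩ S ⊆ T)),
      (K.card : ℝ)⁻¹ * phi μ p K (c • x) := by
    simp only [E2]
    rw [Finset.sum_filter]
  rw [b1, b2] at a5
  unfold info at a5 ⊢
  linarith

end Code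

section Det
set_option linter.unusedSectionVars false
variable [Group G] [MulAction G X] [DecidableEq G]

lemma tl_filter_card (A : Finset G) (c : G) (P : G → Prop) [DecidablePred P] :
    ((tl A c).filter P).card = (A.filter (fun a => P (a * c))).card := by
  unfold tl
  rw [Finset.filter_map, Finset.card_map]
  rfl

lemma lower_det (φ : X → ℝ) (K : Finset G) (hK : K.Nonempty) (L : ℝ) (hφ0 : ∀ x, 0 ≤ φ x)
    (hφL : ∀ x, φ x ≤ L * K.card) (f s η h ε C ρ : ℝ) (F : ℕ → Finset G)
    (hC : ∀ n : ℕ, ((⋃ k ∈ Finset.range n, ((F k : Set G)⁻¹ * (F n : Set G))).ncard : ℝ)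
      ≤ C * (F n).card) (hC0 : 0 < C) (h0 : 0 < η) (h1 : η < 1)
    (n0 M : ℕ) (S : Finset G) (x : X) (A' : Set X) (J : ℕ → X → ℝ) (total : ℝ)
    (hA' : ∀ y ∈ A', ∃ n, n0 ≤ n ∧ n < M ∧ J n y ≤ (h - ε) * (F n).card ∧
      (f - s) * K.card * (F n).card ≤ ∑ g ∈ F n, φ (g • y))
    (hne : ∀ n, n0 ≤ n → (F n).Nonempty)
    (hbad : ∀ n, n0 ≤ n → ∑ k ∈ K, (((F n).filter (fun f => k * f ∉ F n)).card : ℝ) ≤ s * (F n).card)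
    (D : Finset G) (hDS : D ⊆ S) (hDA : ∀ c ∈ D, c • x ∈ A')
    (hDF : ∀ c ∈ D, ∀ n < M, ∀ f ∈ F n, f * c ∈ S)
    (hDc : ρ * S.card ≤ D.card)
    (hcode : ∀ I ⊆ S, ∀ nn : G → ℕ, (∀ c ∈ I, n0 ≤ nn c ∧ nn c < M) →
      total ≤ 2 * s * S.card + ∑ c ∈ I, (s * (F (nn c)).card + J (nn c) (c • x)) +
        ∑ c ∈ (K⁻¹ * S).filter
          (fun c => ¬ (tl K c ∩ S ⊆ I.biUnion fun c => tl (F (nn c)) c)),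
            (K.card : ℝ)⁻¹ * φ (c • x))
    (hSφ : ∑ c ∈ S, φ (c • x) ≤ (f + s) * K.card * S.card)
    (hKS : (((K⁻¹ * S) \ S).card : ℝ) ≤ s * S.card) :
    ∃ t : ℝ, ρ * S.card ≤ (1 / η + C / (1 - η)) * t ∧
      total ≤ 2 * s * S.card + (s + h - ε) * t + (f + s + L * s) * S.card -
        (f - s - L * (η + s)) * t := by
  have hKc : (0:ℝ) < K.card := by exact_mod_cast hK.card_pos
  have hL : 0 ≤ L := by
    have := (hφ0 x).trans (hφL x)
    by_contra hl
    push Not at hl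
    nlinarith
  have hex : ∀ c : G, ∃ n, c ∈ D → (n0 ≤ n ∧ n < M ∧ J n (c • x) ≤ (h - ε) * (F n).card ∧
      (f - s) * K.card * (F n).card ≤ ∑ g ∈ F n, φ (g • c • x)) := by
    intro c
    by_cases hc : c ∈ D
    · obtain ⟨n, hn⟩ := hA' _ (hDA c hc)
      exact ⟨n, fun _ => hn⟩
    · exact ⟨0, fun h => absurd h hc⟩
  choose nn hnn using hex
  obtain ⟨I, hID, E, hEs, hEc, hEd, hEU, hcov⟩ := cover F C hC hC0 η h0 h1 M D nn
    (fun c hc => ⟨(hnn c hc).2.1, hne _ (hnn c hc).1⟩)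
  have hκ : 0 < 1 / η + C / (1 - η) := by
    have : 0 < 1 - η := by linarith
    positivity
  set t : ℝ := ∑ c ∈ I, ((F (nn c)).card : ℝ) with ht
  refine ⟨t, ?_, ?_⟩
  · refine hDc.trans (hcov.trans (mul_le_mul_of_nonneg_left ?_ hκ.le))
    rw [Finset.card_biUnion hEd]
    push_cast
    refine Finset.sum_le_sum fun c hc => ?_
    have := Finset.card_le_card (hEs c hc)
    rw [card_tl] at this
    exact_mod_cast this
  have hc := hcode I (hID.trans hDS) nn (fun c hc => ⟨(hnn c (hID hc)).1, (hnn c (hID hc)).2.1⟩)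
  set T := I.biUnion fun c => tl (F (nn c)) c with hT
  have b1 : ∑ c ∈ I, (s * (F (nn c)).card + J (nn c) (c • x)) ≤ (s + h - ε) * t := by
    rw [ht, Finset.mul_sum]
    refine Finset.sum_le_sum fun c hc => ?_
    have := (hnn c (hID hc)).2.2.1
    linarith
  set Q := (K⁻¹ * S).filter (fun c => ¬ (tl K c ∩ S ⊆ T)) with hQ
  set core := fun c => (E c).filter (fun g => ∀ k ∈ K, k * g ∈ tl (F (nn c)) c) with hcore
  have hcd : ∀ c ∈ I, ∀ c' ∈ I, c ≠ c' → Disjoint (core c) (core c') := fun c hc c' hc' hne =>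
    Finset.disjoint_of_subset_left (Finset.filter_subset _ _)
      (Finset.disjoint_of_subset_right (Finset.filter_subset _ _) (hEd c hc c' hc' hne))
  have hcs : I.biUnion core ⊆ S := by
    intro g hg
    obtain ⟨c, hc, hgc⟩ := Finset.mem_biUnion.1 hg
    obtain ⟨a, ha, rfl⟩ := mem_tl.1 (hEs c hc (Finset.mem_filter.1 hgc).1)
    exact hDF c (hID hc) _ (hnn c (hID hc)).2.1 a ha
  have hcQ : Q ⊆ ((K⁻¹ * S) \ S) ∪ (S \ I.biUnion core) := by
    intro g hg
    obtain ⟨hg1, hg2⟩ := Finset.mem_filter.1 hg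
    by_cases hgS : g ∈ S
    · refine Finset.mem_union_right _ (Finset.mem_sdiff.2 ⟨hgS, fun hgc => hg2 ?_⟩)
      obtain ⟨c, hc, hgc⟩ := Finset.mem_biUnion.1 hgc
      intro z hz
      obtain ⟨k, hk, rfl⟩ := mem_tl.1 (Finset.mem_inter.1 hz).1
      exact Finset.mem_biUnion.2 ⟨c, hc, (Finset.mem_filter.1 hgc).2 k hk⟩
    · exact Finset.mem_union_left _ (Finset.mem_sdiff.2 ⟨hg1, hgS⟩)
  have b2 : ∑ g ∈ Q, φ (g • x) ≤ ∑ g ∈ (K⁻¹ * S) \ S, φ (g • x) +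
      ∑ g ∈ S \ I.biUnion core, φ (g • x) := by
    refine (Finset.sum_le_sum_of_subset_of_nonneg hcQ fun g _ _ => hφ0 _).trans ?_
    rw [Finset.sum_union]
    refine Finset.disjoint_left.2 fun g h1 h2 => ?_
    exact (Finset.mem_sdiff.1 h1).2 (Finset.mem_sdiff.1 h2).1
  have bdd : ∀ R : Finset G, ∑ g ∈ R, φ (g • x) ≤ L * K.card * R.card := by
    intro R
    have := Finset.sum_le_card_nsmul R (fun g => φ (g • x)) (L * K.card) fun g _ => hφL _
    rw [nsmul_eq_mul] at this
    linarith
  have b3 : ∑ g ∈ (K⁻¹ * S) \ S, φ (g • x) ≤ L * K.card * (s * S.card) :=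
    (bdd _).trans (mul_le_mul_of_nonneg_left hKS (by positivity))
  have b4 := Finset.sum_sdiff (f := fun g => φ (g • x)) hcs
  have b5 : (f - s - L * (η + s)) * K.card * t ≤ ∑ g ∈ I.biUnion core, φ (g • x) := by
    rw [Finset.sum_biUnion hcd, ht, Finset.mul_sum]
    refine Finset.sum_le_sum fun c hc => ?_
    have c1 := (hnn c (hID hc)).2.2.2
    have c2 : ∑ g ∈ tl (F (nn c)) c, φ (g • x) = ∑ g ∈ F (nn c), φ (g • c • x) := by
      rw [sum_tl]; simp [mul_smul]
    have hsub : core c ⊆ tl (F (nn c)) c := (Finset.filter_subset _ _).trans (hEs c hc)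
    have c3 := Finset.sum_sdiff (f := fun g => φ (g • x)) hsub
    have c4 := bdd (tl (F (nn c)) c \ core c)
    have c5 : ((tl (F (nn c)) c \ core c).card : ℝ) ≤ (η + s) * (F (nn c)).card := by
      have d1 : tl (F (nn c)) c \ core c ⊆ (tl (F (nn c)) c \ E c) ∪
          (tl (F (nn c)) c).filter (fun g => ∃ k ∈ K, k * g ∉ tl (F (nn c)) c) := by
        intro g hg
        obtain ⟨g1, g2⟩ := Finset.mem_sdiff.1 hg
        by_cases hgE : g ∈ E c
        · refine Finset.mem_union_right _ (Finset.mem_filter.2 ⟨g1, ?_⟩)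
          by_contra hcon
          push Not at hcon
          exact g2 (Finset.mem_filter.2 ⟨hgE, hcon⟩)
        · exact Finset.mem_union_left _ (Finset.mem_sdiff.2 ⟨g1, hgE⟩)
      have d2 := (Finset.card_le_card d1).trans (Finset.card_union_le _ _)
      have d2' : ((tl (F (nn c)) c \ core c).card : ℝ) ≤ (tl (F (nn c)) c \ E c).card +
        ((tl (F (nn c)) c).filter (fun g => ∃ k ∈ K, k * g ∉ tl (F (nn c)) c)).card := by
        exact_mod_cast d2
      have d3 := Finset.card_sdiff_add_card_eq_card (hEs c hc)
      rw [card_tl] at d3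
      have d3' : (((tl (F (nn c)) c \ E c).card : ℝ)) + (E c).card = (F (nn c)).card := by
        exact_mod_cast d3
      have d4 := hEc c hc
      have d5 := bad_card K (F (nn c))
      have d6 := hbad _ (hnn c (hID hc)).1
      have d7 : ((tl (F (nn c)) c).filter (fun g => ∃ k ∈ K, k * g ∉ tl (F (nn c)) c)).card =
          ((F (nn c)).filter (fun f => ∃ k ∈ K, k * f ∉ F (nn c))).card := by
        rw [tl_filter_card]
        congr 1
        refine Finset.filter_congr fun a _ => ?_
        simp [mem_tl', mul_assoc]
      rw [d7] at d2'
      linarith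
    have c6 : L * K.card * (tl (F (nn c)) c \ core c).card ≤
        L * K.card * ((η + s) * (F (nn c)).card) :=
      mul_le_mul_of_nonneg_left c5 (by positivity)
    nlinarith
  have b6 : ∑ c ∈ Q, (K.card : ℝ)⁻¹ * φ (c • x) ≤
      (f + s + L * s) * S.card - (f - s - L * (η + s)) * t := by
    rw [← Finset.mul_sum, inv_mul_le_iff₀ hKc]
    have : ∑ g ∈ Q, φ (g • x) ≤ L * K.card * (s * S.card) + (f + s) * K.card * S.card -
      (f - s - L * (η + s)) * K.card * t := by linarith
    refine this.trans (le_of_eq ?_)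
    ring
  linarith

end Det

section Upper
set_option linter.unusedSectionVars false
variable [Group G] [MulAction G X] [MeasurableSpace X] {k : ℕ}
variable [MeasurableConstSMul G X] [DecidableEq G] (μ : Measure X) [IsProbabilityMeasure μ]
variable [Countable G] [SMulInvariantMeasure G X μ]

lemma erg_up (herg : IsErgodicGAction G μ)
    {F : ℕ → Finset G} (hF : IsFolnerSeq F) (hT : IsTemperedSeq F)
    (hne : ∀ᶠ n in atTop, (F n).Nonempty)
    (f : X → ℝ) (hf : Measurable f) (M : ℝ) (hM : ∀ x, |f x| ≤ M) (c : ℝ) (hc : ∫ y, f y ∂μ < c) :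
    ∀ᵐ x ∂μ, ∀ᶠ N in atTop, ∑ g ∈ F N, f (g • x) ≤ c * (F N).card := by
  filter_upwards [ergodic_thm μ herg hF hT hne f hf M hM] with x hx
  filter_upwards [hx.eventually_lt_const hc, hne] with N h1 h2
  have : (0:ℝ) < (F N).card := by exact_mod_cast h2.card_pos
  exact ((div_lt_iff₀ this).1 h1).le

lemma erg_low (herg : IsErgodicGAction G μ)
    {F : ℕ → Finset G} (hF : IsFolnerSeq F) (hT : IsTemperedSeq F)
    (hne : ∀ᶠ n in atTop, (F n).Nonempty)
    (f : X → ℝ) (hf : Measurable f) (M : ℝ) (hM : ∀ x, |f x| ≤ M) (c : ℝ) (hc : c < ∫ y, f y ∂μ) :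
    ∀ᵐ x ∂μ, ∀ᶠ N in atTop, c * (F N).card ≤ ∑ g ∈ F N, f (g • x) := by
  filter_upwards [ergodic_thm μ herg hF hT hne f hf M hM] with x hx
  filter_upwards [hx.eventually_const_lt hc, hne] with N h1 h2
  have : (0:ℝ) < (F N).card := by exact_mod_cast h2.card_pos
  exact ((lt_div_iff₀ this).1 h1).le

lemma phi_abs {p : X → Fin k} (hp : Measurable p) (K : Finset G) (hK : K.Nonempty) (x : X) :
    |phi μ p K x| ≤ (Real.log k + 1) * K.card := by
  rw [abs_of_nonneg (phi_nonneg μ hp K x)]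
  exact phi_le μ hp K hK x

lemma smb_upper (herg : IsErgodicGAction G μ)
    {F : ℕ → Finset G} (hF : IsFolnerSeq F) (hT : IsTemperedSeq F) (hG : GrowthCond F)
    {p : X → Fin k} (hp : Measurable p) (u0 : G → Fin k) (h : ℝ)
    (hfreq : ∀ e > 0, ∃ᶠ n in atTop, HH μ p u0 (F n) ≤ (h + e) * (F n).card) (ε : ℝ) (hε : 0 < ε) :
    ∀ᵐ x ∂μ, ∀ᶠ N in atTop, info μ p (F N) x ≤ (h + ε) * (F N).card := by
  set L := Real.log k + 1 with hL
  have hL0 : 0 < L := by have := log_k_nonneg μ p; linarith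
  set s := ε / (5 + L) with hs
  have hs0 : 0 < s := by positivity
  have hsL : (5 + L) * s = ε := by rw [hs]; field_simp
  obtain ⟨m, hm1, hm2, hm3⟩ := ((hfreq s hs0).and_eventually ((growth_ne hG).and
    ((growth_card hG).eventually_ge_atTop (Real.log 2 / s)))).exists
  set K := F m with hKdef
  have hKc : (0:ℝ) < K.card := by exact_mod_cast hm2.card_pos
  rw [div_le_iff₀ hs0] at hm3
  have hintlt : ∫ y, phi μ p K y ∂μ < (h + 3 * s) * K.card := by
    have := le_HH μ hp u0 K
    nlinarith
  filter_upwards [code μ hp hG K hm2 s hs0 0 0 (by simpa using hs0.le),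
    erg_up μ herg hF hT (growth_ne hG) (phi μ p K) (measurable_phi μ hp K) _
      (phi_abs μ hp K hm2) _ hintlt] with x hx1 hx2
  filter_upwards [hx1, hx2, fol_bad hF K⁻¹ s hs0] with N h1 h2 h3
  have h4 := h1 ∅ (by simp) (fun _ => 0) (by simp)
  rw [Finset.sum_empty] at h4
  have h5 : ∑ c ∈ (K⁻¹ * F N).filter (fun c => ¬ (tl K c ∩ F N ⊆ (∅ : Finset G).biUnion
      fun c => tl (F 0) c)), (K.card : ℝ)⁻¹ * phi μ p K (c • x) ≤
      (K.card : ℝ)⁻¹ * (∑ c ∈ F N, phi μ p K (c • x) + (L * K.card) * ((K⁻¹ * F N) \ F N).card) := by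
    rw [← Finset.mul_sum]
    refine mul_le_mul_of_nonneg_left ?_ (by positivity)
    calc _ ≤ ∑ c ∈ F N ∪ ((K⁻¹ * F N) \ F N), phi μ p K (c • x) := by
            refine Finset.sum_le_sum_of_subset_of_nonneg ?_ fun c _ _ => phi_nonneg μ hp K _
            intro c hc
            have := (Finset.mem_filter.1 hc).1
            simp [this]
      _ = ∑ c ∈ F N, phi μ p K (c • x) + ∑ c ∈ ((K⁻¹ * F N) \ F N), phi μ p K (c • x) :=
            Finset.sum_union Finset.disjoint_sdiff
      _ ≤ _ := by
            gcongr
            refine (Finset.sum_le_card_nsmul _ _ _ fun c _ => phi_le μ hp K hm2 _).trans ?_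
            rw [nsmul_eq_mul, mul_comm]
  have h6 := (mul_sdiff_card K⁻¹ (F N)).trans h3
  have h7 : (K.card : ℝ)⁻¹ * (∑ c ∈ F N, phi μ p K (c • x) + (L * K.card) * ((K⁻¹ * F N) \ F N).card)
      ≤ (K.card : ℝ)⁻¹ * ((h + 3 * s) * K.card * (F N).card + (L * K.card) * (s * (F N).card)) := by
    gcongr
  have h8 : (K.card : ℝ)⁻¹ * ((h + 3 * s) * K.card * (F N).card + (L * K.card) * (s * (F N).card))
      = (h + (3 + L) * s) * (F N).card := by
    field_simp
    ring
  rw [← hsL]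
  nlinarith [h4, h5, h7, h8]

end Upper

section Lower
set_option linter.unusedSectionVars false

lemma low_arith (S t total s h ε f L η ρ0 : ℝ) (hS : 0 ≤ S) (ht0 : 0 ≤ t) (hε : 0 < ε) (hs0 : 0 < s)
    (hL0 : 0 < L) (hs1 : (3 + L) * s ≤ ε / 4) (hs2 : (5 + L) * s ≤ ε * ρ0 / 4) (hηL : L * η ≤ ε / 4)
    (hf1 : h - s ≤ f) (hf2 : f ≤ h + 2 * s) (ht3 : ρ0 * S ≤ t)
    (ht2 : total ≤ 2 * s * S + (s + h - ε) * t + (f + s + L * s) * S -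
        (f - s - L * (η + s)) * t) : total ≤ (h - ε * ρ0 / 4) * S := by
  have c1 : (2 * s + f + s + L * s) * S ≤ (h + ε * ρ0 / 4) * S := by
    refine mul_le_mul_of_nonneg_right ?_ hS
    linarith
  have c2 : ((s + h - ε) - (f - s - L * (η + s))) * t ≤ -(ε / 2) * t := by
    refine mul_le_mul_of_nonneg_right ?_ ht0
    linarith
  have c3 : ε / 2 * (ρ0 * S) ≤ ε / 2 * t := by gcongr
  linarith

lemma mono_cov [MeasurableSpace X] (μ : Measure X) [IsProbabilityMeasure μ] (A : Set X)
    (E : ℕ → Set X) (hE : Monotone E) (h : ∀ᵐ x ∂μ, x ∈ A → ∃ n, x ∈ E n) (b : ℝ)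
    (hb : b < μ.real A) : ∀ᶠ n in atTop, b < μ.real (A ∩ E n) := by
  have h1 := tendsto_measure_iUnion_atTop (μ := μ) (s := fun n => A ∩ E n)
    (fun i j hij => inter_subset_inter_right A (hE hij))
  have h2 : μ (⋃ n, A ∩ E n) = μ A := by
    refine measure_congr ?_
    filter_upwards [h] with x hx
    apply propext
    change (x ∈ ⋃ n, A ∩ E n) ↔ x ∈ A
    simp only [mem_iUnion, mem_inter_iff]
    exact ⟨fun ⟨n, hn⟩ => hn.1, fun hA => (hx hA).imp fun n hn => ⟨hA, hn⟩⟩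
  rw [h2] at h1
  have h3 := (ENNReal.tendsto_toReal (measure_ne_top μ A)).comp h1
  exact h3.eventually_const_lt hb

variable [Group G] [MulAction G X] [MeasurableSpace X] {k : ℕ}
variable [MeasurableConstSMul G X] [DecidableEq G] (μ : Measure X) [IsProbabilityMeasure μ]
variable [Countable G] [SMulInvariantMeasure G X μ]

lemma measurable_info {p : X → Fin k} (hp : Measurable p) (S : Finset G) :
    Measurable (info μ p S) := by
  have : Nonempty (Fin k) := ⟨⟨0, kpos μ p⟩⟩
  exact measurable_loc hp S (fun u => -Real.log (mm μ p S u))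
    (fun u v h => by rw [(mm_cons μ hp).loc S u v h]) (fun _ => Classical.arbitrary _)

lemma smb_no {F : ℕ → Finset G} (hG : GrowthCond F)
    {p : X → Fin k} (hp : Measurable p) (u0 : G → Fin k) (h h' : ℝ)
    (hev : ∀ e > 0, ∀ᶠ n in atTop, (h - e) * (F n).card ≤ HH μ p u0 (F n))
    (hup : ∀ᵐ x ∂μ, ∀ᶠ N in atTop, info μ p (F N) x ≤ h' * (F N).card) : h ≤ h' := by
  by_contra hlt
  push Not at hlt
  set e := (h - h') / 4 with he
  have he0 : 0 < e := by rw [he]; linarith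
  set c := h' + e with hc
  set L := Real.log k + 1 with hL
  have hlim : Tendsto (fun N => ∫ x, max (phi μ p (F N) x / (F N).card) c ∂μ) atTop
      (𝓝 (∫ _x, c ∂μ)) := by
    refine tendsto_integral_filter_of_dominated_convergence (fun _ => L + |c|) ?_ ?_ ?_ ?_
    · exact Eventually.of_forall fun N =>
        (((measurable_phi μ hp (F N)).div_const _).max measurable_const).aestronglyMeasurable
    · filter_upwards [growth_ne hG] with N hN
      refine Eventually.of_forall fun x => ?_
      have h1 : (0:ℝ) < (F N).card := by exact_mod_cast hN.card_pos
      have h2 : phi μ p (F N) x / (F N).card ≤ L := (div_le_iff₀ h1).2 (phi_le μ hp _ hN x)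
      have h3 : 0 ≤ phi μ p (F N) x / (F N).card := div_nonneg (phi_nonneg μ hp _ _) h1.le
      rw [Real.norm_eq_abs, abs_of_nonneg (h3.trans (le_max_left _ _))]
      exact max_le (by have := abs_nonneg c; linarith) (by have := le_abs_self c; linarith)
    · exact integrable_const _
    · filter_upwards [hup, ae_mm_pos (G := G) μ hp] with x hx hpos
      refine tendsto_const_nhds.congr' ?_
      filter_upwards [hx, growth_ne hG, (growth_card hG).eventually_ge_atTop (Real.log 2 / e)]
        with N h1 h2 h3
      have h4 : (0:ℝ) < (F N).card := by exact_mod_cast h2.card_pos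
      rw [div_le_iff₀ he0] at h3
      have h5 := phi_le_info μ hp (F N) x (hpos _)
      rw [max_eq_right]
      rw [div_le_iff₀ h4, hc]
      nlinarith
  simp only [integral_const, probReal_univ, one_smul] at hlim
  have : h - e ≤ c := by
    refine ge_of_tendsto hlim ?_
    filter_upwards [hev e he0, growth_ne hG] with N h1 h2
    have h4 : (0:ℝ) < (F N).card := by exact_mod_cast h2.card_pos
    have h5 := h1.trans (HH_le μ hp u0 (F N))
    have hi : Integrable (fun x => phi μ p (F N) x / (F N).card) μ := by
      refine Integrable.of_bound
        ((measurable_phi μ hp (F N)).div_const _).aestronglyMeasurable L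
        (Eventually.of_forall fun x => ?_)
      rw [Real.norm_eq_abs, abs_div, abs_of_pos h4, div_le_iff₀ h4]
      exact phi_abs μ hp _ h2 x
    calc h - e ≤ (∫ x, phi μ p (F N) x ∂μ) / (F N).card := (le_div_iff₀ h4).2 h5
      _ = ∫ x, phi μ p (F N) x / (F N).card ∂μ := (integral_div _ _).symm
      _ ≤ _ := integral_mono hi (hi.sup (integrable_const c)) fun x => le_max_left _ _
  linarith

set_option maxHeartbeats 1000000 in
lemma smb_lower (herg : IsErgodicGAction G μ)
    {F : ℕ → Finset G} (hF : IsFolnerSeq F) (hT : IsTemperedSeq F) (hG : GrowthCond F)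
    {p : X → Fin k} (hp : Measurable p) (u0 : G → Fin k) (h : ℝ)
    (hev : ∀ e > 0, ∀ᶠ n in atTop, (h - e) * (F n).card ≤ HH μ p u0 (F n))
    (hfreq : ∀ e > 0, ∃ᶠ n in atTop, HH μ p u0 (F n) ≤ (h + e) * (F n).card) (ε : ℝ) (hε : 0 < ε) :
    ∀ᵐ x ∂μ, ∀ᶠ N in atTop, (h - ε) * (F N).card ≤ info μ p (F N) x := by
  by_contra hcon
  set A : Set X := {x | ¬ ∀ᶠ N in atTop, (h - ε) * (F N).card ≤ info μ p (F N) x} with hA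
  have hA0 : μ A ≠ 0 := hcon
  set a := μ.real A with ha
  have ha0 : 0 < a := ENNReal.toReal_pos hA0 (measure_ne_top _ _)
  obtain ⟨C, hC0, hC⟩ := hT
  have hT : IsTemperedSeq F := ⟨C, hC0, hC⟩
  have hne := growth_ne hG
  set L := Real.log k + 1 with hL
  have hL0 : 0 < L := by have := log_k_nonneg μ p; linarith
  -- constants
  obtain ⟨η, hη0, hη1, hηL⟩ : ∃ η : ℝ, 0 < η ∧ η < 1 ∧ L * η ≤ ε / 4 := by
    refine ⟨min (1/2) (ε / 4 / L), by positivity, ?_, ?_⟩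
    · exact (min_le_left _ _).trans_lt (by norm_num)
    · calc L * min (1/2) (ε / 4 / L) ≤ L * (ε / 4 / L) := by gcongr; exact min_le_right _ _
        _ = ε / 4 := by field_simp
  set κ := 1 / η + C / (1 - η) with hκ
  have hκ0 : 0 < κ := by
    have : 0 < 1 - η := by linarith
    positivity
  set ρ := a / 4 with hρ
  have hρpos : 0 < ρ := by positivity
  set ρ0 := ρ / κ with hρ0
  have hrhopos : 0 < ρ0 := by positivity
  obtain ⟨s, hs0, hs1, hs2⟩ : ∃ s : ℝ, 0 < s ∧ (3 + L) * s ≤ ε / 4 ∧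
      (5 + L) * s ≤ ε * ρ0 / 4 := by
    refine ⟨min (ε / 4 / (3 + L)) (ε * ρ0 / 4 / (5 + L)), by positivity, ?_, ?_⟩
    · calc (3 + L) * min (ε / 4 / (3 + L)) (ε * ρ0 / 4 / (5 + L))
          ≤ (3 + L) * (ε / 4 / (3 + L)) := by gcongr; exact min_le_left _ _
        _ = ε / 4 := by field_simp
    · calc (5 + L) * min (ε / 4 / (3 + L)) (ε * ρ0 / 4 / (5 + L))
          ≤ (5 + L) * (ε * ρ0 / 4 / (5 + L)) := by gcongr; exact min_le_right _ _
        _ = ε * ρ0 / 4 := by field_simp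
  obtain ⟨m, hm1, hm4, hm2, hm3⟩ := ((hfreq s hs0).and_eventually ((hev s hs0).and ((growth_ne hG).and
    ((growth_card hG).eventually_ge_atTop (Real.log 2 / s))))).exists
  set K := F m with hKdef
  have hKc : (0:ℝ) < K.card := by exact_mod_cast hm2.card_pos
  rw [div_le_iff₀ hs0] at hm3
  set I0 := ∫ y, phi μ p K y ∂μ with hI0
  set f := I0 / K.card with hf
  have hfK : f * K.card = I0 := by rw [hf]; field_simp
  have hf1 : h - s ≤ f := (le_div_iff₀ hKc).2 (hm4.trans (HH_le μ hp u0 K))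
  have hf2 : f ≤ h + 2 * s := by
    rw [hf, div_le_iff₀ hKc]
    have := le_HH μ hp u0 K
    nlinarith
  have hφm := measurable_phi μ hp K
  have hφa := phi_abs μ hp K hm2
  have hφL := phi_le μ hp K hm2
  have hφ0 := phi_nonneg μ hp K
  -- choice of n0
  set E : ℕ → Set X := fun n0 => {x | ∀ n, n0 ≤ n → (f - s) * K.card * (F n).card ≤
    ∑ g ∈ F n, phi μ p K (g • x)} with hE
  have hEmono : Monotone E := fun i j hij x hx n hn => hx n (hij.trans hn)
  have hEm : ∀ n0, MeasurableSet (E n0) := by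
    intro n0
    have : E n0 = ⋂ n, ⋂ (_ : n0 ≤ n), {x | (f - s) * K.card * (F n).card ≤
      ∑ g ∈ F n, phi μ p K (g • x)} := by ext x; simp [hE]
    rw [this]
    refine MeasurableSet.iInter fun n => MeasurableSet.iInter fun _ => ?_
    exact measurableSet_le measurable_const (Finset.measurable_fun_sum _ fun g _ =>
      hφm.comp (measurable_const_smul g))
  have hEae : ∀ᵐ x ∂μ, x ∈ A → ∃ n, x ∈ E n := by
    filter_upwards [erg_low μ herg hF hT hne (phi μ p K) hφm _ hφa ((f - s) * K.card)
      (by rw [← hI0]; nlinarith)] with x hx _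
    exact eventually_atTop.1 hx
  obtain ⟨n0, hn1, hn2, hn3, hn4⟩ := ((growth_tail hG s hs0).and
    ((eventually_forall_ge_atTop.2 hne).and ((eventually_forall_ge_atTop.2 (fol_bad hF K s hs0)).and
    (mono_cov μ A E hEmono hEae (3 * a / 4) (by linarith))))).exists
  -- choice of M
  set E2 : ℕ → Set X := fun M => {x | ∃ n, n0 ≤ n ∧ n < M ∧ info μ p (F n) x < (h - ε) * (F n).card}
    with hE2
  have hE2mono : Monotone E2 := fun i j hij x ⟨n, hn, hnM, h3⟩ => ⟨n, hn, hnM.trans_le hij, h3⟩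
  have hE2m : ∀ M, MeasurableSet (E2 M) := by
    intro M
    have : E2 M = ⋃ n, ⋃ (_ : n0 ≤ n), ⋃ (_ : n < M), {x | info μ p (F n) x <
      (h - ε) * (F n).card} := by
      ext x
      simp only [hE2, mem_iUnion, Set.mem_ofPred_eq, exists_prop]
    rw [this]
    exact MeasurableSet.iUnion fun n => MeasurableSet.iUnion fun _ => MeasurableSet.iUnion fun _ =>
      measurableSet_lt (measurable_info μ hp _) measurable_const
  obtain ⟨M, hM⟩ := (mono_cov μ (A ∩ E n0) E2 hE2mono (by
    refine Eventually.of_forall fun x hx => ?_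
    have hxA := hx.1
    simp only [hA, Set.mem_ofPred_eq, not_eventually, not_le] at hxA
    obtain ⟨n, hn⟩ := (frequently_atTop.1 hxA) n0
    exact ⟨n + 1, n, hn.1, Nat.lt_succ_self n, hn.2⟩) (a / 2) (by linarith)).exists
  set A' := E n0 ∩ E2 M with hA'
  have hA'm : MeasurableSet A' := (hEm n0).inter (hE2m M)
  have hA'μ : a / 2 < μ.real A' := by
    refine hM.trans_le (measureReal_mono ?_)
    rintro x ⟨⟨_, h2⟩, h3⟩
    exact ⟨h2, h3⟩
  set U := (Finset.range M).biUnion F with hU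
  have key : ∀ᵐ x ∂μ, ∀ᶠ N in atTop, info μ p (F N) x ≤ (h - ε * ρ0 / 4) * (F N).card := by
    filter_upwards [code μ hp hG K hm2 s hs0 n0 M (hn1 M),
      erg_up μ herg hF hT hne (phi μ p K) hφm _ hφa ((f + s) * K.card) (by rw [← hI0]; nlinarith),
      erg_low μ herg hF hT hne (A'.indicator fun _ => (1:ℝ)) (measurable_const.indicator hA'm) 1
        (fun x => by by_cases hx : x ∈ A' <;> simp [hx]) (3 * a / 8)
        (by rw [integral_indicator_const _ hA'm]; simp; linarith)] with x hx1 hx2 hx3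
    filter_upwards [hx1, hx2, hx3, fol_bad hF K⁻¹ s hs0, fol_bad hF U (a / 8) (by positivity)]
      with N h1 h2 h3 h4 h5
    classical
    set D := (F N).filter (fun c => c • x ∈ A' ∧ ¬ ∃ u ∈ U, u * c ∉ F N) with hD
    have hDc : ρ * (F N).card ≤ D.card := by
      have e1 : ∑ g ∈ F N, A'.indicator (fun _ => (1:ℝ)) (g • x) =
          ((F N).filter (fun c => c • x ∈ A')).card := by
        rw [Finset.card_filter]
        push_cast
        refine Finset.sum_congr rfl fun g _ => ?_
        by_cases hg : g • x ∈ A' <;> simp [hg]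
      have e2 : (F N).filter (fun c => c • x ∈ A') ⊆
          D ∪ (F N).filter (fun c => ∃ u ∈ U, u * c ∉ F N) := by
        intro c hc
        rw [Finset.mem_filter] at hc
        rw [Finset.mem_union, hD, Finset.mem_filter, Finset.mem_filter]
        tauto
      have e3 := (Finset.card_le_card e2).trans (Finset.card_union_le _ _)
      have e3' : (((F N).filter (fun c => c • x ∈ A')).card : ℝ) ≤ D.card +
        ((F N).filter (fun c => ∃ u ∈ U, u * c ∉ F N)).card := by exact_mod_cast e3
      have e4 := (bad_card U (F N)).trans h5
      rw [e1] at h3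
      rw [hρ]
      linarith
    obtain ⟨t, ht1, ht2⟩ := lower_det (phi μ p K) K hm2 L hφ0 hφL f s η h ε C ρ F hC hC0 hη0 hη1
      n0 M (F N) x A' (fun n => info μ p (F n)) (info μ p (F N) x)
      (by
        rintro y ⟨hy1, n, hy2, hy3, hy4⟩
        exact ⟨n, hy2, hy3, hy4.le, hy1 n hy2⟩)
      hn2 hn3 D (Finset.filter_subset _ _) (fun c hc => (Finset.mem_filter.1 hc).2.1)
      (by
        intro c hc n hn g hg
        have := (Finset.mem_filter.1 hc).2.2
        push Not at this
        exact this g (Finset.mem_biUnion.2 ⟨n, Finset.mem_range.2 hn, hg⟩))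
      hDc h1 h2 ((mul_sdiff_card K⁻¹ (F N)).trans h4)
    have ht3 : ρ0 * (F N).card ≤ t := by
      rw [hρ0, div_mul_eq_mul_div, div_le_iff₀ hκ0]; linarith
    have hS : (0:ℝ) ≤ (F N).card := by positivity
    have ht0 : 0 ≤ t := le_trans (by positivity) ht3
    exact low_arith _ _ _ _ _ _ _ _ _ _ hS ht0 hε hs0 hL0 hs1 hs2 hηL hf1 hf2 ht3 ht2
  have := smb_no μ hG hp u0 h _ hev key
  have : 0 < ε * ρ0 / 4 := by positivity
  linarith

end Lower

section Bridge
set_option linter.unusedSectionVars false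

lemma part_map [MeasurableSpace X] {k : ℕ} (P : Fin k → Set X) (hP : IsMeasPartition P) :
    ∃ p : X → Fin k, Measurable p ∧ ∀ i x, x ∈ P i ↔ p x = i := by
  obtain ⟨h1, h2, h3⟩ := hP
  have hex : ∀ x, ∃ i, x ∈ P i := fun x => by
    have : x ∈ ⋃ i, P i := by rw [h3]; trivial
    exact mem_iUnion.1 this
  choose p hp using hex
  have key : ∀ i x, x ∈ P i ↔ p x = i := by
    intro i x
    constructor
    · intro hx
      by_contra hne
      exact (Set.disjoint_left.1 (h2 hne)) (hp x) hx
    · rintro rfl; exact hp x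
  refine ⟨p, measurable_to_countable' fun i => ?_, key⟩
  convert h1 i
  ext x
  exact (key i x).symm

variable [Group G] [MetricSpace X] [MulAction G X] [MeasurableSpace X] {k : ℕ}
variable [MeasurableConstSMul G X] [DecidableEq G] (μ : Measure X) [IsProbabilityMeasure μ]
variable [Countable G] [SMulInvariantMeasure G X μ]

lemma partH_eq (P : Fin k → Set X) {p : X → Fin k} (h : ∀ i x, x ∈ P i ↔ p x = i)
    (u0 : G → Fin k) (S : Finset G) : partH μ P S = HH μ p u0 S := by
  unfold HH partH
  rw [sum_cfg_eq]
  refine Finset.sum_congr (by ext; simp) fun v _ => ?_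
  congr 1
  unfold mm Measure.real
  congr 2
  ext y
  simp only [mem_iInter, mem_preimage, h, cyl, Set.mem_ofPred_eq, Subtype.forall]
  refine forall₂_congr fun g hg => ?_
  simp [extc, hg]

lemma part_facts (herg : IsErgodicGAction G μ)
    {F : ℕ → Finset G} (hF : IsFolnerSeq F) (hT : IsTemperedSeq F) (hG : GrowthCond F)
    (P : Fin k → Set X) {p : X → Fin k} (hp : Measurable p) (h : ∀ i x, x ∈ P i ↔ p x = i) :
    (∀ ε > 0, ∀ᵐ x ∂μ, ∀ᶠ N in atTop, (partEnt μ F P - ε) * (F N).card ≤ info μ p (F N) x) ∧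
    (∀ ε > 0, ∀ᵐ x ∂μ, ∀ᶠ N in atTop, info μ p (F N) x ≤ (partEnt μ F P + ε) * (F N).card) := by
  have : Nonempty (Fin k) := ⟨⟨0, kpos μ p⟩⟩
  set u0 : G → Fin k := fun _ => Classical.arbitrary _
  set L := Real.log k + 1 with hL
  have hb1 : ∀ n, 0 ≤ partH μ P (F n) / (F n).card := by
    intro n
    refine div_nonneg ?_ (by positivity)
    rw [partH_eq μ P h u0]
    exact Finset.sum_nonneg fun u _ =>
      Real.negMulLog_nonneg ((mm_cons μ hp).nonneg _ _) ((mm_cons μ hp).le_one _ _)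
  have hb2 : ∀ᶠ n in atTop, partH μ P (F n) / (F n).card ≤ L := by
    filter_upwards [growth_ne hG] with n hn
    have hc : (0:ℝ) < (F n).card := by exact_mod_cast hn.card_pos
    rw [div_le_iff₀ hc, partH_eq μ P h u0]
    refine (HH_le μ hp u0 _).trans ?_
    have hi : Integrable (phi μ p (F n)) μ := Integrable.of_bound
      (measurable_phi μ hp (F n)).aestronglyMeasurable (L * (F n).card)
      (Eventually.of_forall fun x => phi_abs μ hp _ hn x)
    calc ∫ x, phi μ p (F n) x ∂μ ≤ ∫ _x, L * (F n).card ∂μ :=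
          integral_mono hi (integrable_const _) fun x => phi_le μ hp _ hn x
      _ = L * (F n).card := by simp
  have hbd : IsBoundedUnder (· ≥ ·) atTop (fun n => partH μ P (F n) / (F n).card) :=
    isBoundedUnder_of ⟨0, hb1⟩
  have hcb : IsCoboundedUnder (· ≥ ·) atTop (fun n => partH μ P (F n) / (F n).card) :=
    IsBoundedUnder.isCoboundedUnder_ge ⟨L, by simpa using hb2⟩
  have hev : ∀ e > 0, ∀ᶠ n in atTop, (partEnt μ F P - e) * (F n).card ≤ HH μ p u0 (F n) := by
    intro e he
    filter_upwards [eventually_lt_of_lt_liminf (show partEnt μ F P - e <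
      liminf (fun n => partH μ P (F n) / (F n).card) atTop by unfold partEnt; linarith) hbd,
      growth_ne hG] with n h1 hn
    have hc : (0:ℝ) < (F n).card := by exact_mod_cast hn.card_pos
    rw [← partH_eq μ P h]
    exact ((lt_div_iff₀ hc).1 h1).le
  have hfreq : ∀ e > 0, ∃ᶠ n in atTop, HH μ p u0 (F n) ≤ (partEnt μ F P + e) * (F n).card := by
    intro e he
    refine ((frequently_lt_of_liminf_lt hcb (show liminf (fun n => partH μ P (F n) / (F n).card) atTop
      < partEnt μ F P + e by unfold partEnt; linarith)).and_eventually (growth_ne hG)).mono ?_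
    rintro n ⟨h1, hn⟩
    have hc : (0:ℝ) < (F n).card := by exact_mod_cast hn.card_pos
    rw [← partH_eq μ P h]
    exact ((div_lt_iff₀ hc).1 h1).le
  exact ⟨fun ε hε => smb_lower μ herg hF hT hG hp u0 _ hev hfreq ε hε,
    fun ε hε => smb_upper μ herg hF hT hG hp u0 _ hfreq ε hε⟩

end Bridge

section Local
set_option linter.unusedSectionVars false
variable [Group G] [MetricSpace X] [MulAction G X] [MeasurableSpace X] {k : ℕ}

lemma locTerm_anti (μ : Measure X) [IsProbabilityMeasure μ] {B B' : Set X} (h : B ⊆ B') (m : ℕ) :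
    locTerm μ B' m ≤ locTerm μ B m := by
  unfold locTerm
  by_cases h0 : μ B = 0
  · simp [h0]
  have h1 : μ B' ≠ 0 := fun h' => h0 (measure_mono_null h h')
  rw [if_neg h0, if_neg h1]
  refine ENNReal.ofReal_le_ofReal ?_
  refine div_le_div_of_nonneg_right ?_ (by positivity)
  refine neg_le_neg (Real.log_le_log (ENNReal.toReal_pos h0 (measure_ne_top _ _)) ?_)
  exact ENNReal.toReal_mono (measure_ne_top _ _) (measure_mono h)

lemma bowenBall_mono (F : Finset G) (x : X) {δ δ' : ℝ} (h : δ ≤ δ') :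
    bowenBall F x δ ⊆ bowenBall F x δ' := fun _ hy g hg => (hy g hg).trans_le h

lemma upLoc_anti (μ : Measure X) [IsProbabilityMeasure μ] (F : ℕ → Finset G) (x : X) {δ δ' : ℝ}
    (h : δ ≤ δ') : upLoc μ F x δ' ≤ upLoc μ F x δ :=
  limsup_le_limsup (Eventually.of_forall fun n => locTerm_anti μ (bowenBall_mono (F n) x h) _)

variable [DecidableEq G] {α : Type*} [Fintype α] in
lemma sum_cfg_prod' (u0 : G → α) (S : Finset G) (wt : G → α → ℝ) :
    ∑ u ∈ cfg u0 S, ∏ g ∈ S, wt g (u g) = ∏ g ∈ S, ∑ a, wt g a := by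
  induction S using Finset.induction_on with
  | empty => rw [sum_cfg_empty]; simp
  | insert g S hg ih =>
    rw [sum_cfg_insert _ _ _ hg, Finset.prod_insert hg, ← ih, mul_comm, Finset.sum_mul]
    refine Finset.sum_congr rfl fun u _ => ?_
    rw [Finset.mul_sum]
    refine Finset.sum_congr rfl fun a _ => ?_
    rw [Finset.prod_insert hg, mul_comm]
    simp only [Function.update_self]
    congr 1
    refine Finset.prod_congr rfl fun k hk => ?_
    rw [Function.update_of_ne]
    rintro rfl; exact hg hk

/-- The noise kernel. -/
noncomputable def nu (k : ℕ) (γ : ℝ) (a b : Fin k) : ℝ := if a = b then 1 - γ else γ / k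

lemma nu_nonneg {γ : ℝ} (h0 : 0 < γ) (h1 : γ < 1) (a b : Fin k) : 0 ≤ nu k γ a b := by
  unfold nu
  split
  · linarith
  · positivity

lemma nu_sum {γ : ℝ} (h0 : 0 < γ) (b : Fin k) : ∑ a, nu k γ a b ≤ 1 := by
  have hk : (0:ℝ) < k := by exact_mod_cast Fin.pos b
  have : ∀ a, nu k γ a b ≤ (if a = b then 1 - γ else 0) + γ / k := by
    intro a
    unfold nu
    split
    · have : 0 < γ / k := by positivity
      linarith
    · linarith
  refine (Finset.sum_le_sum fun a _ => this a).trans ?_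
  rw [Finset.sum_add_distrib]
  simp
  field_simp
  linarith

lemma nu_ge {γ : ℝ} (h0 : 0 < γ) (h1 : γ < 1) (a b : Fin k) : (1 - γ) * (γ / k) ≤ nu k γ a b := by
  have hk : (1:ℝ) ≤ k := by exact_mod_cast Fin.pos b
  have h2 : γ / k ≤ 1 := by rw [div_le_one (by linarith)]; linarith
  have h3 : 0 < γ / k := by positivity
  unfold nu
  split
  · nlinarith
  · nlinarith

lemma nu_le_one {γ : ℝ} (h0 : 0 < γ) (h1 : γ < 1) (a b : Fin k) : nu k γ a b ≤ 1 := by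
  have hk : (1:ℝ) ≤ k := by exact_mod_cast Fin.pos b
  have h2 : γ / k ≤ 1 := by rw [div_le_one (by linarith)]; linarith
  unfold nu
  split
  · linarith
  · exact h2

variable [MeasurableConstSMul G X] [DecidableEq G] (μ : Measure X) [IsProbabilityMeasure μ]
variable [Countable G] [SMulInvariantMeasure G X μ]

/-- The noisy mixture weight. -/
noncomputable def VV (p' : X → Fin k) (γ : ℝ) (u0 : G → Fin k) (S : Finset G) (w : G → Fin k) : ℝ :=
  ∑ v ∈ cfg u0 S, mm μ p' S v * ∏ g ∈ S, nu k γ (w g) (v g)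

lemma VV_sum {p' : X → Fin k} (hp' : Measurable p') {γ : ℝ} (h0 : 0 < γ) (h1 : γ < 1)
    (u0 : G → Fin k) (S : Finset G) : ∑ w ∈ cfg u0 S, VV μ p' γ u0 S w ≤ 1 := by
  unfold VV
  rw [Finset.sum_comm, ← (mm_cons (G := G) μ hp').total u0 S]
  refine Finset.sum_le_sum fun v _ => ?_
  rw [← Finset.mul_sum, sum_cfg_prod' u0 S (fun g a => nu k γ a (v g))]
  refine mul_le_of_le_one_right ((mm_cons μ hp').nonneg _ _) ?_
  exact Finset.prod_le_one (fun g _ => Finset.sum_nonneg fun a _ => nu_nonneg h0 h1 _ _)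
    fun g _ => nu_sum h0 _

lemma VV_ge {p p' : X → Fin k} (hp' : Measurable p') {γ : ℝ} (h0 : 0 < γ) (h1 : γ < 1)
    (u0 : G → Fin k) (S : Finset G) (Bad : Set X) [DecidablePred (· ∈ Bad)] (δ : ℝ)
    (hBad : ∀ x y, x ∉ Bad → dist x y < δ → p' y = p x) (x : X) :
    μ.real (bowenBall S x δ) * ((1 - γ) ^ S.card *
      (γ / k) ^ (S.filter (fun g => g • x ∈ Bad)).card) ≤ VV μ p' γ u0 S (nam p x) := by
  have e : ∫ y, ∏ g ∈ S, nu k γ (nam p x g) (nam p' y g) ∂μ = VV μ p' γ u0 S (nam p x) :=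
    integral_loc μ hp' S (fun v => ∏ g ∈ S, nu k γ (nam p x g) (v g))
      (fun u v h => Finset.prod_congr rfl fun g hg => by rw [h g hg]) u0
  have hm : Measurable (fun y => ∏ g ∈ S, nu k γ (nam p x g) (nam p' y g)) :=
    measurable_loc hp' S (fun v => ∏ g ∈ S, nu k γ (nam p x g) (v g))
      (fun u v h => Finset.prod_congr rfl fun g hg => by rw [h g hg]) u0
  rw [← e]
  set c := (1 - γ) ^ S.card * (γ / k) ^ (S.filter (fun g => g • x ∈ Bad)).card with hc
  have hk : (0:ℝ) < k := by exact_mod_cast kpos μ p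
  have hg1 : 0 < 1 - γ := by linarith
  have hc0 : 0 < c := by positivity
  have hnn : ∀ y, 0 ≤ ∏ g ∈ S, nu k γ (nam p x g) (nam p' y g) :=
    fun y => Finset.prod_nonneg fun g _ => nu_nonneg h0 h1 _ _
  have hsub : bowenBall S x δ ⊆ {y | c ≤ ∏ g ∈ S, nu k γ (nam p x g) (nam p' y g)} := by
    intro y hy
    have : c = ∏ g ∈ S, ((1 - γ) * if g • x ∈ Bad then γ / k else 1) := by
      rw [Finset.prod_mul_distrib, Finset.prod_const, ← Finset.prod_filter, Finset.prod_const]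
    change c ≤ _
    rw [this]
    refine Finset.prod_le_prod (fun g _ => ?_) fun g hg => ?_
    · split <;> positivity
    · split
      · exact nu_ge h0 h1 _ _
      · rename_i hb
        have := hBad _ _ hb (hy g hg)
        unfold nu nam
        rw [if_pos this.symm, mul_one]
  have hi : Integrable (fun y => ∏ g ∈ S, nu k γ (nam p x g) (nam p' y g)) μ := by
    refine Integrable.of_bound hm.aestronglyMeasurable 1 (Eventually.of_forall fun y => ?_)
    rw [Real.norm_eq_abs, abs_of_nonneg (hnn y)]
    exact Finset.prod_le_one (fun g _ => nu_nonneg h0 h1 _ _) fun g _ => nu_le_one h0 h1 _ _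
  have := mul_meas_ge_le_integral_of_nonneg (μ := μ) (Eventually.of_forall hnn) hi c
  rw [mul_comm]
  refine le_trans ?_ this
  exact mul_le_mul_of_nonneg_left (measureReal_mono hsub) hc0.le

end Local

section BK
set_option linter.unusedSectionVars false

lemma exists_noise (ε : ℝ) (hε : 0 < ε) : ∃ γ : ℝ, 0 < γ ∧ γ < 1 ∧ -ε ≤ Real.log (1 - γ) := by
  have h1 : Real.exp (-ε) < 1 := by rw [Real.exp_lt_one_iff]; linarith
  have h2 := Real.exp_pos (-ε)
  refine ⟨1 - Real.exp (-ε), by linarith, by linarith, ?_⟩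
  simp

lemma exists_thick [MetricSpace X] [CompactSpace X] [MeasurableSpace X] [BorelSpace X]
    (μ : Measure X) [IsProbabilityMeasure μ] {k : ℕ} {p : X → Fin k} (hp : Measurable p)
    (b : ℝ) (hb : 0 < b) : ∃ (Bad : Set X) (δ : ℝ) (p' : X → Fin k), MeasurableSet Bad ∧
      μ.real Bad < b ∧ 0 < δ ∧ Measurable p' ∧ ∀ x y, x ∉ Bad → dist x y < δ → p' y = p x := by
  have hk := kpos μ p
  have hk' : (0:ℝ) < k := by exact_mod_cast hk
  have hm : ∀ i, MeasurableSet (p ⁻¹' {i}) := fun i => hp (measurableSet_singleton i)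
  have hex : ∀ i, ∃ K ⊆ p ⁻¹' {i}, IsClosed K ∧ μ (p ⁻¹' {i} \ K) < ENNReal.ofReal (b / k) := by
    intro i
    exact (hm i).exists_isClosed_sdiff_lt (measure_ne_top _ _) (by
      simp only [ne_eq, ENNReal.ofReal_eq_zero, not_le]; positivity)
  choose K hK1 hK2 hK3 using hex
  have hdis : ∀ i j, i ≠ j → Disjoint (K i) (K j) := by
    intro i j hij
    refine Set.disjoint_left.2 fun x hx hx' => hij ?_
    have h1 := hK1 i hx
    have h2 := hK1 j hx'
    simp only [mem_preimage, mem_singleton_iff] at h1 h2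
    rw [← h1, h2]
  have hthick : ∀ᶠ δ in 𝓝[>] (0:ℝ), ∀ i j, i ≠ j →
      Disjoint (Metric.thickening δ (K i)) (Metric.thickening δ (K j)) := by
    refine eventually_all.2 fun i => eventually_all.2 fun j => ?_
    by_cases hij : i = j
    · exact Eventually.of_forall fun _ h => absurd hij h
    obtain ⟨d, hd, hdd⟩ := (hdis i j hij).exists_thickenings (hK2 i).isCompact (hK2 j)
    filter_upwards [Ioo_mem_nhdsGT hd] with δ hδ _
    exact hdd.mono (Metric.thickening_mono hδ.2.le _) (Metric.thickening_mono hδ.2.le _)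
  obtain ⟨δ, hδ, hδ0⟩ := (hthick.and self_mem_nhdsWithin).exists
  set U : Fin k → Set X := fun i => Metric.thickening δ (K i) with hU
  have hUm : ∀ i, MeasurableSet (U i) := fun i => Metric.isOpen_thickening.measurableSet
  set i0 : Fin k := ⟨0, hk⟩
  set Q : Fin k → Set X := fun i => U i ∪ {x | i = i0 ∧ x ∉ ⋃ j, U j} with hQ
  have hQp : IsMeasPartition Q := by
    refine ⟨fun i => (hUm i).union ?_, ?_, ?_⟩
    · by_cases hi : i = i0
      · simp only [hi, true_and]
        exact (MeasurableSet.iUnion hUm).compl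
      · simp [hi]
    · intro i j hij
      refine Set.disjoint_left.2 ?_
      rintro x (hx | ⟨hx, hx2⟩) (hy | ⟨hy, hy2⟩)
      · exact Set.disjoint_left.1 (hδ i j hij) hx hy
      · exact hy2 (mem_iUnion.2 ⟨i, hx⟩)
      · exact hx2 (mem_iUnion.2 ⟨j, hy⟩)
      · exact hij (hx.trans hy.symm)
    · rw [eq_univ_iff_forall]
      intro x
      by_cases hx : x ∈ ⋃ j, U j
      · obtain ⟨j, hj⟩ := mem_iUnion.1 hx
        exact mem_iUnion.2 ⟨j, Or.inl hj⟩
      · exact mem_iUnion.2 ⟨i0, Or.inr ⟨rfl, hx⟩⟩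
  obtain ⟨p', hp', hp'Q⟩ := part_map Q hQp
  refine ⟨(⋃ i, K i)ᶜ, δ, p', (MeasurableSet.iUnion fun i => (hK2 i).measurableSet).compl, ?_, hδ0,
    hp', ?_⟩
  · have h1 : (⋃ i, K i)ᶜ ⊆ ⋃ i, (p ⁻¹' {i} \ K i) := by
      intro x hx
      refine mem_iUnion.2 ⟨p x, rfl, fun h => hx (mem_iUnion.2 ⟨_, h⟩)⟩
    have h2 : μ.real (⋃ i, (p ⁻¹' {i} \ K i)) ≤ ∑ i, μ.real (p ⁻¹' {i} \ K i) :=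
      measureReal_iUnion_fintype_le _
    have h3 : ∑ i, μ.real (p ⁻¹' {i} \ K i) < ∑ _i : Fin k, b / k := by
      refine Finset.sum_lt_sum_of_nonempty ⟨i0, Finset.mem_univ _⟩ fun i _ => ?_
      have := ENNReal.toReal_lt_of_lt_ofReal (hK3 i)
      exact this
    have h4 : ∑ _i : Fin k, b / k = b := by simp; field_simp
    exact ((measureReal_mono h1).trans h2).trans_lt (h3.trans_eq h4)
  · intro x y hx hxy
    simp only [mem_compl_iff, not_not] at hx
    obtain ⟨i, hi⟩ := mem_iUnion.1 hx
    have h1 : p x = i := hK1 i hi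
    have h2 : y ∈ Q i := Or.inl (Metric.mem_thickening_iff.2 ⟨x, hi, by rwa [dist_comm]⟩)
    rw [h1]
    exact (hp'Q i y).1 h2

lemma exists_small_part [MetricSpace X] [CompactSpace X] [MeasurableSpace X] [BorelSpace X]
    (δ : ℝ) (hδ : 0 < δ) : ∃ (k : ℕ) (P : Fin k → Set X), IsMeasPartition P ∧
      ∀ i, ∀ x ∈ P i, ∀ y ∈ P i, dist x y < δ := by
  classical
  obtain ⟨t, -, htf, ht⟩ := finite_cover_balls_of_compact (isCompact_univ (X := X)) (half_pos hδ)
  obtain ⟨k, c, hc⟩ := htf.fin_embedding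
  set P : Fin k → Set X := fun i => {x | x ∈ Metric.ball (c i) (δ / 2) ∧ ∀ j < i,
    x ∉ Metric.ball (c j) (δ / 2)} with hP
  refine ⟨k, P, ⟨fun i => ?_, ?_, ?_⟩, ?_⟩
  · have : P i = Metric.ball (c i) (δ / 2) ∩ ⋂ j, ⋂ (_ : j < i), (Metric.ball (c j) (δ / 2))ᶜ := by
      ext x; simp [hP]
    rw [this]
    exact measurableSet_ball.inter (MeasurableSet.iInter fun j => MeasurableSet.iInter fun _ =>
      measurableSet_ball.compl)
  · intro i j hij
    refine Set.disjoint_left.2 fun x hx hy => ?_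
    rcases lt_or_gt_of_ne hij with h | h
    · exact hy.2 i h hx.1
    · exact hx.2 j h hy.1
  · rw [eq_univ_iff_forall]
    intro x
    have hne : (Finset.univ.filter fun i => x ∈ Metric.ball (c i) (δ / 2)).Nonempty := by
      obtain ⟨y, hy, hxy⟩ := mem_iUnion₂.1 (ht (mem_univ x))
      rw [← hc] at hy
      obtain ⟨i, rfl⟩ := hy
      exact ⟨i, by simpa using hxy⟩
    refine mem_iUnion.2 ⟨Finset.min' _ hne, ?_, fun j hj hxj => ?_⟩
    · exact (Finset.mem_filter.1 (Finset.min'_mem _ hne)).2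
    · exact absurd (Finset.min'_le _ j (Finset.mem_filter.2 ⟨Finset.mem_univ _, hxj⟩)) (not_le.2 hj)
  · intro i x hx y hy
    have h1 := Metric.mem_ball.1 hx.1
    have h2 := Metric.mem_ball'.1 hy.1
    linarith [dist_triangle x (c i) y]

variable [Group G] [MetricSpace X] [CompactSpace X] [MulAction G X] [MeasurableSpace X] [BorelSpace X]
variable [MeasurableConstSMul G X] [DecidableEq G] (μ : Measure X) [IsProbabilityMeasure μ]
variable [Countable G] [SMulInvariantMeasure G X μ]

lemma bk_lower (herg : IsErgodicGAction G μ)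
    {F : ℕ → Finset G} (hF : IsFolnerSeq F) (hT : IsTemperedSeq F) (hG : GrowthCond F)
    {k : ℕ} (P : Fin k → Set X) (hP : IsMeasPartition P) (ε : ℝ) (hε : 0 < ε) :
    ∀ᵐ x ∂μ, ENNReal.ofReal (partEnt μ F P - 4 * ε) ≤ ⨆ (δ : ℝ) (_ : 0 < δ), lowLoc μ F x δ := by
  classical
  obtain ⟨p, hp, hpP⟩ := part_map P hP
  have hk : (0:ℝ) < k := by exact_mod_cast kpos μ p
  have : Nonempty (Fin k) := ⟨⟨0, kpos μ p⟩⟩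
  set u0 : G → Fin k := fun _ => Classical.arbitrary _
  set h := partEnt μ F P with hh
  obtain ⟨γ, hγ0, hγ1, hγ⟩ := exists_noise ε hε
  set l := |Real.log (γ / k)| with hl
  set b := ε / (l + 1) with hb
  have hl0 : 0 ≤ l := abs_nonneg _
  have hb0 : 0 < b := by positivity
  have hbl : b * l ≤ ε := by
    rw [hb, div_mul_eq_mul_div, div_le_iff₀ (by positivity)]; nlinarith
  obtain ⟨Bad, δ, p', hBm, hBμ, hδ, hp', hBad⟩ := exists_thick μ hp b hb0
  have hbc : ∀ᵐ x ∂μ, ∀ᶠ n in atTop, x ∉ {x | mm μ p (F n) (nam p x) <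
      Real.exp (-ε * (F n).card) * VV μ p' γ u0 (F n) (nam p x)} := by
    refine borel_cantelli_real μ hG ε hε _ fun n => ?_
    have := barron μ hp (F n) (VV μ p' γ u0 (F n))
      (fun u => Finset.sum_nonneg fun v _ => mul_nonneg ((mm_cons μ hp').nonneg _ _)
        (Finset.prod_nonneg fun g _ => nu_nonneg hγ0 hγ1 _ _))
      (fun u v huv => Finset.sum_congr rfl fun w _ => by
        congr 1
        exact Finset.prod_congr rfl fun g hg => by rw [huv g hg])
      u0 1 (Real.exp (-ε * (F n).card)) (Real.exp_pos _).le (VV_sum μ hp' hγ0 hγ1 u0 (F n))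
    rwa [mul_one] at this
  filter_upwards [hbc, (part_facts μ herg hF hT hG P hp hpP).1 ε hε, ae_mm_pos (G := G) μ hp,
    erg_up μ herg hF hT (growth_ne hG) (Bad.indicator fun _ => (1:ℝ))
      (measurable_const.indicator hBm) 1 (fun x => by by_cases hx : x ∈ Bad <;> simp [hx]) b
        (by rw [integral_indicator_const _ hBm]; simpa using hBμ)] with x h1 h2 h3 h4
  refine le_trans ?_ (le_iSup₂ δ hδ)
  refine le_liminf_of_le (by isBoundedDefault) ?_
  filter_upwards [h1, h2, h4, growth_ne hG] with n g1 g2 g4 g5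
  have hc : (0:ℝ) < (F n).card := by exact_mod_cast g5.card_pos
  unfold locTerm
  by_cases h0 : μ (bowenBall (F n) x δ) = 0
  · simp [h0]
  rw [if_neg h0]
  refine ENNReal.ofReal_le_ofReal ?_
  rw [le_div_iff₀ hc]
  have hBpos : 0 < μ.real (bowenBall (F n) x δ) := ENNReal.toReal_pos h0 (measure_ne_top _ _)
  change _ ≤ -Real.log (μ.real (bowenBall (F n) x δ))
  simp only [Set.mem_ofPred_eq, not_lt] at g1
  set N := ((F n).filter (fun g => g • x ∈ Bad)).card with hN
  have e1 : ∑ g ∈ F n, Bad.indicator (fun _ => (1:ℝ)) (g • x) = N := by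
    rw [hN, Finset.card_filter]
    push_cast
    refine Finset.sum_congr rfl fun g _ => ?_
    by_cases hg : g • x ∈ Bad <;> simp [hg]
  rw [e1] at g4
  have g6 := VV_ge μ (p := p) hp' hγ0 hγ1 u0 (F n) Bad δ hBad x
  have g7 : Real.exp (-ε * (F n).card) * (μ.real (bowenBall (F n) x δ) * ((1 - γ) ^ (F n).card *
      (γ / k) ^ N)) ≤ mm μ p (F n) (nam p x) :=
    (mul_le_mul_of_nonneg_left g6 (Real.exp_pos _).le).trans g1
  have hg1 : 0 < 1 - γ := by linarith
  have hgk : 0 < γ / k := by positivity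
  have g8 := Real.log_le_log (by positivity) g7
  rw [Real.log_mul (Real.exp_pos _).ne' (by positivity), Real.log_mul hBpos.ne' (by positivity),
    Real.log_mul (by positivity) (by positivity), Real.log_exp, Real.log_pow, Real.log_pow] at g8
  unfold info at g2
  have e2 : -((N:ℝ) * l) ≤ N * Real.log (γ / k) := by
    have := neg_abs_le (Real.log (γ / k))
    have hN0 : (0:ℝ) ≤ N := by positivity
    nlinarith
  have e3 : (N:ℝ) * l ≤ ε * (F n).card := by
    calc (N:ℝ) * l ≤ b * (F n).card * l := by gcongr
      _ = b * l * (F n).card := by ring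
      _ ≤ _ := by gcongr
  have e4 : -ε * (F n).card ≤ (F n).card * Real.log (1 - γ) := by nlinarith
  linarith

lemma bk_upper (herg : IsErgodicGAction G μ)
    {F : ℕ → Finset G} (hF : IsFolnerSeq F) (hT : IsTemperedSeq F) (hG : GrowthCond F)
    (δ : ℝ) (hδ : 0 < δ) (ε : ℝ) (hε : 0 < ε) :
    ∀ᵐ x ∂μ, upLoc μ F x δ ≤ measEnt μ F + ENNReal.ofReal ε := by
  obtain ⟨k, P, hP, hPd⟩ := exists_small_part (X := X) δ hδ
  obtain ⟨p, hp, hpP⟩ := part_map P hP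
  have hle : ENNReal.ofReal (partEnt μ F P + ε) ≤ measEnt μ F + ENNReal.ofReal ε := by
    refine ENNReal.ofReal_add_le.trans (add_le_add_left ?_ _)
    unfold measEnt
    exact le_iSup_of_le k (le_iSup₂_of_le P hP le_rfl)
  filter_upwards [(part_facts μ herg hF hT hG P hp hpP).2 ε hε, ae_mm_pos (G := G) μ hp] with x h1 h2
  refine le_trans ?_ hle
  refine limsup_le_of_le (by isBoundedDefault) ?_
  filter_upwards [h1, growth_ne hG] with n g1 g5
  have hc : (0:ℝ) < (F n).card := by exact_mod_cast g5.card_pos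
  have hsub : cyl p (F n) (nam p x) ⊆ bowenBall (F n) x δ := by
    intro y hy g hg
    exact hPd (p (g • x)) _ ((hpP _ _).2 rfl) _ ((hpP _ _).2 (hy g hg))
  refine (locTerm_anti μ hsub _).trans ?_
  have hpos := h2 (F n)
  unfold locTerm
  have h0 : μ (cyl p (F n) (nam p x)) ≠ 0 := by
    intro h0
    unfold mm Measure.real at hpos
    rw [h0] at hpos
    simp at hpos
  rw [if_neg h0]
  refine ENNReal.ofReal_le_ofReal ?_
  rw [div_le_iff₀ hc]
  exact g1

end BK

/-- Brin–Katok entropy formula, ergodic case. For a `G`-invariant ergodic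
Borel probability measure `μ` and a tempered Følner sequence `{F_n}` with
`lim_n |F_n|/log n = ∞`, for `μ`-a.e. `x`,
`lim_{δ→0} liminf_n -(1/|F_n|) log μ(B_{F_n}(x,δ)) = lim_{δ→0} limsup_n -(1/|F_n|) log μ(B_{F_n}(x,δ)) = h_μ(X,G)`. -/
theorem brin_katok_formula
    [Group G] [Countable G] [MetricSpace X] [CompactSpace X]
    [MulAction G X] [ContinuousConstSMul G X] [MeasurableSpace X] [BorelSpace X]
    (μ : Measure X) [IsProbabilityMeasure μ] [SMulInvariantMeasure G X μ]
    (herg : IsErgodicGAction G μ)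
    (F : ℕ → Finset G) (hFol : IsFolnerSeq F) (hTemp : IsTemperedSeq F)
    (hGrow : GrowthCond F) :
    ∀ᵐ x ∂μ,
      (⨆ (δ : ℝ) (_ : 0 < δ), lowLoc μ F x δ) = measEnt μ F ∧
      (⨆ (δ : ℝ) (_ : 0 < δ), upLoc μ F x δ) = measEnt μ F := by
  classical
  have hlow : ∀ᵐ x ∂μ, ∀ q : ℚ, ENNReal.ofReal q < measEnt μ F →
      ENNReal.ofReal q ≤ ⨆ (δ : ℝ) (_ : 0 < δ), lowLoc μ F x δ := by
    rw [ae_all_iff]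
    intro q
    by_cases hq : ENNReal.ofReal q < measEnt μ F
    · have hq' := hq
      unfold measEnt at hq'
      obtain ⟨k, hq1⟩ := lt_iSup_iff.1 hq'
      obtain ⟨P, hq2⟩ := lt_iSup_iff.1 hq1
      obtain ⟨hP, hq3⟩ := lt_iSup_iff.1 hq2
      have hq4 : (q:ℝ) < partEnt μ F P := (ENNReal.ofReal_lt_ofReal_iff').1 hq3 |>.1
      filter_upwards [bk_lower μ herg hFol hTemp hGrow P hP ((partEnt μ F P - q) / 4)
        (by linarith)] with x hx _
      refine le_trans (ENNReal.ofReal_le_ofReal ?_) hx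
      linarith
    · exact Eventually.of_forall fun x h => absurd h hq
  have hup : ∀ᵐ x ∂μ, ∀ m n : ℕ, upLoc μ F x (1 / ((m:ℝ) + 1)) ≤
      measEnt μ F + ENNReal.ofReal (1 / ((n:ℝ) + 1)) := by
    rw [ae_all_iff]
    intro m
    rw [ae_all_iff]
    intro n
    exact bk_upper μ herg hFol hTemp hGrow _ Nat.one_div_pos_of_nat _ Nat.one_div_pos_of_nat
  filter_upwards [hlow, hup] with x h1 h2
  have hA : measEnt μ F ≤ ⨆ (δ : ℝ) (_ : 0 < δ), lowLoc μ F x δ := by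
    refine le_of_forall_lt fun c hc => ?_
    obtain ⟨q, hq0, hq1, hq2⟩ := ENNReal.lt_iff_exists_rat_btwn.1 hc
    exact hq1.trans_le (h1 q hq2)
  have hB : (⨆ (δ : ℝ) (_ : 0 < δ), lowLoc μ F x δ) ≤ ⨆ (δ : ℝ) (_ : 0 < δ), upLoc μ F x δ :=
    iSup₂_mono fun δ _ => liminf_le_limsup
  have hC : (⨆ (δ : ℝ) (_ : 0 < δ), upLoc μ F x δ) ≤ measEnt μ F := by
    refine iSup₂_le fun δ hδ => ?_
    obtain ⟨m, hm⟩ := exists_nat_one_div_lt hδ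
    refine (upLoc_anti μ F x hm.le).trans ?_
    have hlim : Tendsto (fun n : ℕ => measEnt μ F + ENNReal.ofReal (1 / ((n:ℝ) + 1))) atTop
        (𝓝 (measEnt μ F + ENNReal.ofReal 0)) :=
      tendsto_const_nhds.add ((ENNReal.continuous_ofReal.tendsto 0).comp
        tendsto_one_div_add_atTop_nhds_zero_nat)
    rw [ENNReal.ofReal_zero, add_zero] at hlim
    exact ge_of_tendsto' hlim (h2 m)
  exact ⟨le_antisymm (hB.trans hC) hA, le_antisymm hC (hA.trans hB)⟩
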